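/- arXiv:2001.01951 — 3 statements merged into one kernel-verified Lean document; each statement's English description precedes it below -/
import Mathlib

section
/- Let h_1, ..., h_s be vectors in ℝ^d that generate a dense additive subgroup of ℝ^d, and let f : ℝ^d → ℂ be a continuous function. Suppose that for each i ∈ {1,...,s} there is a natural number n_i ≥ 1 such that the complex linear span of the functions f, τ_{h_i}f, (τ_{h_i})²f, ..., (τ_{h_i})^{n_i}f has dimension at most n_i. Then f is an exponential polynomial. -/
/-- `f : ℝ^d → ℂ` is an exponential polynomial: a finite sum of terms
`P_k(x) * exp(⟨λ_k, x⟩)` with `P_k` complex polynomials and `λ_k ∈ ℂ^d`. -/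
def IsExpPoly {d : ℕ} (f : (Fin d → ℝ) → ℂ) : Prop :=
  ∃ (m : ℕ) (P : Fin m → MvPolynomial (Fin d) ℂ) (lam : Fin m → Fin d → ℂ),
    ∀ x : Fin d → ℝ,
      f x = ∑ k, MvPolynomial.eval (fun i => (x i : ℂ)) (P k) *
        Complex.exp (∑ i, lam k i * x i)

/-!
Each dimension bound makes some nonzero polynomial in `τ_{h_i}` annihilate `f`. As the `τ_{h_i}`
commute, `f` lies in a finite-dimensional space `V` of continuous functions stable under all of
them. On `V` these operators are injective, hence bijective, so `V` is stable under the group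
generated by the `h_i`; being closed for locally uniform convergence, it is stable under the closure
of that group, which is `ℝ^d`. Translation is thus a continuous representation of `ℝ^d` on `V`, a
product over the coordinates of one-parameter groups `exp (x_i A_i)`, and `f x` is its matrix
coefficient `(τ_x f)(0)`. Decomposing vectors into generalized eigenvectors of the `A_i` shows that
matrix coefficients are exponential polynomials.
-/

open MeasureTheory Polynomial Topology
open NormedSpace (exp)
open scoped Nat

namespace IsExpPoly

variable {d : ℕ}

theorem term (P : MvPolynomial (Fin d) ℂ) (lam : Fin d → ℂ) :
    IsExpPoly fun x : Fin d → ℝ =>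
      MvPolynomial.eval (fun i => (x i : ℂ)) P * Complex.exp (∑ i, lam i * x i) :=
  ⟨1, fun _ => P, fun _ => lam, by simp⟩

theorem const (c : ℂ) : IsExpPoly fun _ : Fin d → ℝ => c := by
  simpa using term (MvPolynomial.C c) 0

theorem pow_mul_exp_coord (i : Fin d) (k : ℕ) (μ : ℂ) :
    IsExpPoly fun x : Fin d → ℝ => (x i : ℂ) ^ k * Complex.exp (μ * x i) := by
  simpa [Pi.single_apply] using term (MvPolynomial.X i ^ k) (Pi.single i μ)

theorem add {f g : (Fin d → ℝ) → ℂ} (hf : IsExpPoly f) (hg : IsExpPoly g) :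
    IsExpPoly fun x => f x + g x := by
  obtain ⟨m, P, lam, hf⟩ := hf
  obtain ⟨m', P', lam', hg⟩ := hg
  refine ⟨m + m', Fin.append P P', Fin.append lam lam', fun x => ?_⟩
  simp only [hf x, hg x, Fin.sum_univ_add, Fin.append_left, Fin.append_right]

theorem sum {ι : Type*} (s : Finset ι) {f : ι → (Fin d → ℝ) → ℂ}
    (hf : ∀ k ∈ s, IsExpPoly (f k)) : IsExpPoly fun x => ∑ k ∈ s, f k x := by
  classical
  induction s using Finset.induction_on with
  | empty => simpa using const 0
  | insert a s ha ih =>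
    simp only [Finset.sum_insert ha]
    exact (hf a (s.mem_insert_self a)).add (ih fun k hk => hf k (Finset.mem_insert_of_mem hk))

theorem mul {f g : (Fin d → ℝ) → ℂ} (hf : IsExpPoly f) (hg : IsExpPoly g) :
    IsExpPoly fun x => f x * g x := by
  obtain ⟨m, P, lam, hf⟩ := hf
  obtain ⟨m', P', lam', hg⟩ := hg
  simp only [hf, hg, Finset.sum_mul_sum]
  refine sum _ fun k _ => sum _ fun l _ => ?_
  convert term (P k * P' l) (lam k + lam' l) using 2 with x
  simp only [Pi.add_apply, add_mul, Finset.sum_add_distrib, Complex.exp_add, map_mul]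
  ring

end IsExpPoly

section OneParameterGroups

variable {R : Type*} [NormedRing R] [NormedAlgebra ℝ R] [CompleteSpace R]

theorem exists_isUnit_intervalIntegral {T : ℝ → R} (hT : Continuous T) (h0 : T 0 = 1) :
    ∃ ε : ℝ, IsUnit (∫ s in (0 : ℝ)..ε, T s) := by
  have hslope : Filter.Tendsto (slope (fun t => ∫ s in (0 : ℝ)..t, T s) 0) (𝓝[≠] 0) (𝓝 1) :=
    h0 ▸ (hT.integral_hasStrictDerivAt 0 0).hasDerivAt.tendsto_slope
  obtain ⟨ε, hε, hne : ε ≠ 0⟩ :=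
    ((hslope.eventually (Units.isOpen.mem_nhds isUnit_one)).and self_mem_nhdsWithin).exists
  refine ⟨ε, ?_⟩
  have hεT : ∫ s in (0 : ℝ)..ε, T s =
      Units.mk0 ε hne • slope (fun t => ∫ s in (0 : ℝ)..t, T s) 0 ε := by
    simp [slope_def_module, Units.smul_def, smul_smul, hne]
  exact hεT ▸ hε.smul _

theorem addChar_mul_intervalIntegral (T : AddChar ℝ R) (hT : Continuous T) (t ε : ℝ) :
    T t * ∫ s in (0 : ℝ)..ε, T s = (∫ s in (0 : ℝ)..t + ε, T s) - ∫ s in (0 : ℝ)..t, T s := by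
  have hTint (a b : ℝ) : IntervalIntegrable T volume a b := hT.intervalIntegrable a b
  calc T t * ∫ s in (0 : ℝ)..ε, T s
      = ∫ s in (0 : ℝ)..ε, T (t + s) := by
        simp only [AddChar.map_add_eq_mul]
        exact ((ContinuousLinearMap.mul ℝ R (T t)).intervalIntegral_comp_comm (hTint 0 ε)).symm
    _ = ∫ s in t..t + ε, T s := by
        rw [intervalIntegral.integral_comp_add_left (fun s => T s), add_zero]
    _ = (∫ s in (0 : ℝ)..t + ε, T s) - ∫ s in (0 : ℝ)..t, T s :=
        (intervalIntegral.integral_interval_sub_left (hTint _ _) (hTint _ _)).symm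

-- Multiplying by an invertible average `∫ s in 0..ε, T s` exhibits `T` as a difference of
-- primitives, so continuity already forces differentiability.
theorem exists_hasDerivAt_of_continuous_addChar (T : AddChar ℝ R) (hT : Continuous T) :
    ∃ A : R, ∀ t, HasDerivAt T (T t * A) t := by
  obtain ⟨ε, B, hB⟩ := exists_isUnit_intervalIntegral hT T.map_zero_eq_one
  have hprim (t : ℝ) : HasDerivAt (fun t => ∫ s in (0 : ℝ)..t, T s) (T t) t :=
    (hT.integral_hasStrictDerivAt 0 t).hasDerivAt
  have hT_eq : ⇑T = fun t =>
      ((∫ s in (0 : ℝ)..t + ε, T s) - ∫ s in (0 : ℝ)..t, T s) * (↑B⁻¹ : R) := by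
    funext t
    rw [← addChar_mul_intervalIntegral T hT, ← hB, Units.mul_inv_cancel_right]
  refine ⟨(T ε - 1) * (↑B⁻¹ : R), fun t => ?_⟩
  have hderiv := (((hprim (t + ε)).comp_add_const t ε).sub (hprim t)).mul_const (↑B⁻¹ : R)
  rw [← mul_assoc, mul_sub, mul_one, ← T.map_add_eq_mul]
  exact hderiv.congr_of_eventuallyEq (.of_eq hT_eq)

theorem exists_eq_exp_smul_of_continuous_addChar (T : AddChar ℝ R) (hT : Continuous T) :
    ∃ A : R, ∀ t, T t = exp (t • A) := by
  obtain ⟨A, hA⟩ := exists_hasDerivAt_of_continuous_addChar T hT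
  refine ⟨A, fun t => ?_⟩
  have hderiv (t : ℝ) : HasDerivAt (fun t => T t * exp (t • -A)) 0 t := by
    refine ((hA t).mul (hasDerivAt_exp_smul_const' (-A) t)).congr_deriv ?_
    simp [mul_assoc]
  have hconst : T t * exp (t • -A) = 1 := by
    simpa using is_const_of_deriv_eq_zero (fun t => (hderiv t).differentiableAt)
      (fun t => (hderiv t).deriv) t 0
  have hinv : exp (-(t • A)) * exp (t • A) = 1 := by
    let := NormedAlgebra.restrictScalars ℚ ℝ R
    simp [← NormedSpace.exp_add_of_commute (Commute.refl (t • A)).neg_left]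
  rw [← mul_one (T t), ← hinv, ← mul_assoc, ← smul_neg, hconst, one_mul]

end OneParameterGroups

theorem exp_smul_apply_eq_sum_of_pow_apply_eq_zero {𝕜 E : Type*} [RCLike 𝕜]
    [NormedAddCommGroup E] [NormedSpace 𝕜 E] [CompleteSpace E] {B : E →L[𝕜] E} {N : ℕ} {v : E}
    (hv : (B ^ N) v = 0) (t : 𝕜) :
    exp (t • B) v = ∑ k ∈ Finset.range N, (t ^ k * (k ! : 𝕜)⁻¹) • (B ^ k) v := by
  have hseries := (NormedSpace.exp_series_hasSum_exp' (𝕂 := 𝕜) (t • B)).mapL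
    (ContinuousLinearMap.apply 𝕜 E v)
  simp only [ContinuousLinearMap.apply_apply, _root_.smul_pow, smul_smul, smul_apply,
    mul_comm (_ ! : 𝕜)⁻¹] at hseries
  refine hseries.unique (hasSum_sum_of_ne_finset_zero fun k hk => ?_)
  have hNk : N ≤ k := not_lt.1 (mt Finset.mem_range.2 hk)
  rw [← Nat.sub_add_cancel hNk, pow_add B, mul_apply_eq_comp, hv, map_zero, smul_zero]

section MatrixCoefficients

variable {E : Type*} [NormedAddCommGroup E] [NormedSpace ℂ E]

theorem exp_smul_apply_eq_sum_of_pow_sub_apply_eq_zero [CompleteSpace E] {A : E →L[ℂ] E} {μ : ℂ}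
    {N : ℕ} {v : E} (hv : ((A - μ • 1) ^ N) v = 0) (t : ℂ) :
    exp (t • A) v = ∑ k ∈ Finset.range N,
      (t ^ k * Complex.exp (μ * t) * (k ! : ℂ)⁻¹) • ((A - μ • 1) ^ k) v := by
  have hsplit : t • A = algebraMap ℂ _ (μ * t) + t • (A - μ • 1) := by
    rw [Algebra.algebraMap_eq_smul_one, smul_sub, smul_smul, mul_comm t μ, add_sub_cancel]
  let := NormedAlgebra.restrictScalars ℚ ℂ (E →L[ℂ] E)
  have hexp : exp (t • A) = Complex.exp (μ * t) • exp (t • (A - μ • 1)) := by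
    rw [hsplit, NormedSpace.exp_add_of_commute (Algebra.commute_algebraMap_left _ _),
      ← NormedSpace.algebraMap_exp_comm, ← Complex.exp_eq_exp_ℂ, ← Algebra.smul_def]
  rw [hexp, smul_apply, exp_smul_apply_eq_sum_of_pow_apply_eq_zero hv, Finset.smul_sum]
  refine Finset.sum_congr rfl fun k _ => ?_
  rw [smul_smul, ← mul_assoc, mul_comm (Complex.exp _)]

variable [FiniteDimensional ℂ E] {d : ℕ}

theorem IsExpPoly.apply_exp_smul {F : (Fin d → ℝ) → E →ₗ[ℂ] ℂ}
    (hF : ∀ v, IsExpPoly fun x => F x v) (A : E →L[ℂ] E) (i : Fin d) (v : E) :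
    IsExpPoly fun x => F x (exp (x i • A) v) := by
  have := FiniteDimensional.complete ℂ E
  have hv : v ∈ ⨆ μ, Module.End.maxGenEigenspace (A : E →ₗ[ℂ] E) μ := by
    rw [Module.End.iSup_maxGenEigenspace_eq_top]
    exact Submodule.mem_top
  induction hv using Submodule.iSup_induction' with
  | mem μ v hv =>
    obtain ⟨N, hN⟩ := (Module.End.mem_maxGenEigenspace _ _ _).1 hv
    have hN' : ((A - μ • 1) ^ N) v = 0 := by
      rw [← hN, ← ContinuousLinearMap.coe_coe, ContinuousLinearMap.toLinearMap_pow]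
      rfl
    have hsum (x : Fin d → ℝ) := exp_smul_apply_eq_sum_of_pow_sub_apply_eq_zero hN' (x i)
    simp only [Complex.coe_smul] at hsum
    simp only [hsum, map_sum, map_smul, smul_eq_mul]
    exact .sum _ fun k _ => ((pow_mul_exp_coord i k μ).mul (const _)).mul (hF _)
  | zero => simpa only [map_zero] using const 0
  | add v w _ _ hv hw => simpa only [map_add] using hv.add hw

theorem isExpPoly_apply_of_continuous_addChar (M : AddChar (Fin d → ℝ) (E →L[ℂ] E))
    (hM : Continuous M) (l : E →ₗ[ℂ] ℂ) (v : E) : IsExpPoly fun x => l (M x v) := by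
  classical
  have := FiniteDimensional.complete ℂ E
  have hcoord (i : Fin d) : ∃ A : E →L[ℂ] E, ∀ t : ℝ, M (Pi.single i t) = exp (t • A) :=
    exists_eq_exp_smul_of_continuous_addChar
      (M.compAddMonoidHom (AddMonoidHom.single (fun _ => ℝ) i))
      (hM.comp (continuous_single (A := fun _ => ℝ) i))
  choose A hA using hcoord
  suffices ∀ (S : Finset (Fin d)) (v : E),
      IsExpPoly fun x => l (M (∑ i ∈ S, Pi.single i (x i)) v) by
    simpa only [Finset.univ_sum_single] using this Finset.univ v
  intro S
  induction S using Finset.induction_on with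
  | empty => exact fun v => by simpa using IsExpPoly.const (l v)
  | insert i S hi ih =>
    intro v
    simp only [Finset.sum_insert hi, add_comm (Pi.single i _), AddChar.map_add_eq_mul, hA,
      mul_apply_eq_comp]
    exact IsExpPoly.apply_exp_smul
      (F := fun x => l ∘ₗ (M (∑ j ∈ S, Pi.single j (x j)) : E →ₗ[ℂ] E)) ih (A i) i v

theorem isExpPoly_apply_of_continuous_orbits {W : Type*} [AddCommGroup W] [Module ℂ W]
    [TopologicalSpace W] [IsTopologicalAddGroup W] [ContinuousSMul ℂ W] [T2Space W]
    [FiniteDimensional ℂ W] (ρ : AddChar (Fin d → ℝ) (Module.End ℂ W))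
    (hρ : ∀ w, Continuous fun x => ρ x w) (l : W →ₗ[ℂ] ℂ) (w : W) :
    IsExpPoly fun x => l (ρ x w) := by
  let e : W ≃L[ℂ] (Fin (Module.finrank ℂ W) → ℂ) := (Module.finBasis ℂ W).equivFunL
  let conj : Module.End ℂ W ≃ₐ[ℂ] ((Fin _ → ℂ) →L[ℂ] (Fin _ → ℂ)) :=
    (e.toLinearEquiv.conjAlgEquiv ℂ).trans (Module.End.toContinuousLinearMap _)
  have hconj (x : Fin d → ℝ) (u) : conj (ρ x) u = e (ρ x (e.symm u)) := rfl
  have hcont : Continuous fun x => conj (ρ x) :=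
    continuous_clm_apply.2 fun u => e.continuous.comp (hρ (e.symm u))
  have := isExpPoly_apply_of_continuous_addChar (conj.toMulEquiv.toMonoidHom.compAddChar ρ) hcont
    (l ∘ₗ e.symm.toLinearMap) (e w)
  simpa [hconj] using this

end MatrixCoefficients

section CommutingEndomorphisms

variable {K M : Type*} [Field K] [AddCommGroup M] [Module K M]

theorem exists_aeval_apply_eq_zero_of_not_linearIndependent {T : Module.End K M} {v : M} {n : ℕ}
    (h : ¬ LinearIndependent K fun k : Fin n => (T ^ (k : ℕ)) v) :
    ∃ p : K[X], p ≠ 0 ∧ aeval T p v = 0 := by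
  obtain ⟨c, hc, i, hi⟩ := Fintype.not_linearIndependent_iff.1 h
  refine ⟨∑ k : Fin n, monomial k (c k), fun hp => hi ?_, ?_⟩
  · simpa [finsetSum_coeff, coeff_monomial, Fin.val_inj] using congrArg (coeff · i) hp
  · simpa [aeval_monomial] using hc

theorem finiteDimensional_span_singleton_of_adjoin_eq_top {A : Type*} [CommRing A]
    [Algebra K A] [Module A M] [IsScalarTower K A M] {s : Set A} (hs : s.Finite)
    (hadjoin : Algebra.adjoin K s = ⊤) {v : M}
    (hv : ∀ a ∈ s, ∃ p : K[X], p ≠ 0 ∧ aeval a p • v = 0) :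
    FiniteDimensional K ((A ∙ v).restrictScalars K) := by
  let I := Ideal.torsionOf A M v
  let π := Ideal.Quotient.mkₐ K I
  have hle : Algebra.adjoin K s ≤ (integralClosure K (A ⧸ I)).comap π := by
    refine Algebra.adjoin_le fun a ha => ?_
    obtain ⟨p, hp, hpv⟩ := hv a ha
    have hpI : aeval (π a) p = 0 := by
      rw [aeval_algHom_apply]
      exact Ideal.Quotient.eq_zero_iff_mem.2 ((Ideal.mem_torsionOf_iff _ _).2 hpv)
    exact IsAlgebraic.isIntegral ⟨p, hp, hpI⟩
  have : Algebra.IsIntegral K (A ⧸ I) :=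
    ⟨Ideal.Quotient.mk_surjective.forall.2 fun a => hle (hadjoin ▸ Algebra.mem_top)⟩
  have : Algebra.FiniteType K A := ⟨⟨hs.toFinset, by rwa [hs.coe_toFinset]⟩⟩
  have : Module.Finite K (A ⧸ I) := Algebra.IsIntegral.finite
  exact Module.Finite.equiv ((Ideal.quotTorsionOfEquivSpanSingleton A M v).restrictScalars K)

open scoped IsMulCommutative in
theorem exists_finiteDimensional_invariant_of_commute {ι : Type*} [Finite ι]
    (T : ι → Module.End K M) (hT : ∀ i j, Commute (T i) (T j)) (v : M)
    (hv : ∀ i, ∃ p : K[X], p ≠ 0 ∧ aeval (T i) p v = 0) :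
    ∃ V : Submodule K M, FiniteDimensional K V ∧ v ∈ V ∧ ∀ i, V ≤ V.comap (T i) := by
  let A := Algebra.adjoin K (Set.range T)
  have : IsMulCommutative A :=
    Algebra.isMulCommutative_adjoin K (by rintro _ ⟨i, rfl⟩ _ ⟨j, rfl⟩; exact hT i j)
  have hgen : ((↑) ⁻¹' Set.range T : Set A).Finite :=
    (Set.finite_range T).preimage Subtype.val_injective.injOn
  have hann : ∀ a ∈ ((↑) ⁻¹' Set.range T : Set A), ∃ p : K[X], p ≠ 0 ∧ aeval a p • v = 0 := by
    rintro a ⟨i, hi⟩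
    obtain ⟨p, hp, hpv⟩ := hv i
    refine ⟨p, hp, ?_⟩
    rw [← hpv, hi]
    exact congrArg (· v) (aeval_algHom_apply A.val a p).symm
  exact ⟨(A ∙ v).restrictScalars K,
    finiteDimensional_span_singleton_of_adjoin_eq_top hgen Algebra.adjoin_adjoin_coe_preimage hann,
    Submodule.mem_span_singleton_self v,
    fun i _ hu => (A ∙ v).smul_mem ⟨T i, Algebra.subset_adjoin ⟨i, rfl⟩⟩ hu⟩

end CommutingEndomorphisms

section Invariance

variable {K M X : Type*} [Field K] [AddCommGroup M] [Module K M] [AddCommGroup X]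

theorem le_comap_of_mem_closure (ρ : AddChar X (Module.End K M)) {V : Submodule K M}
    [FiniteDimensional K V] {s : Set X} (hs : ∀ x ∈ s, V ≤ V.comap (ρ x)) {x : X}
    (hx : x ∈ AddSubgroup.closure s) : V ≤ V.comap (ρ x) := by
  have hcancel (x : X) (v : M) : ρ (-x) (ρ x v) = v := by
    rw [← Module.End.mul_apply, ← ρ.map_add_eq_mul, neg_add_cancel, ρ.map_zero_eq_one,
      Module.End.one_apply]
  induction hx using AddSubgroup.closure_induction with
  | mem x hx => exact hs x hx
  | zero => exact fun v hv => by simpa using hv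
  | add x y _ _ hx hy =>
    intro v hv
    simpa [ρ.map_add_eq_mul] using hx (hy hv)
  | neg x _ hx =>
    have hinj : Function.Injective (ρ x) := Function.LeftInverse.injective (hcancel x)
    have hmap : V.map (ρ x) = V :=
      Submodule.eq_of_le_of_finrank_eq (Submodule.map_le_iff_le_comap.2 hx)
        (Submodule.equivMapOfInjective _ hinj V).finrank_eq.symm
    intro v hv
    obtain ⟨u, hu, rfl⟩ : v ∈ V.map (ρ x) := hmap.symm ▸ hv
    rwa [Submodule.mem_comap, hcancel]

/-- The restriction of a representation `ρ` of an additive group to an invariant subspace. As the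
group is additive, a representation is encoded as an `AddChar` with values in endomorphisms. -/
def subrepresentation (ρ : AddChar X (Module.End K M)) (V : Submodule K M)
    (hV : ∀ x, V ≤ V.comap (ρ x)) : AddChar X (Module.End K V) where
  toFun x := (ρ x).restrict (hV x)
  map_zero_eq_one' := by ext; simp
  map_add_eq_mul' x y := by ext; simp [ρ.map_add_eq_mul]

end Invariance

section Translation

variable (K : Type*) {X : Type*} [TopologicalSpace X] [AddMonoid X] [ContinuousAdd X]

/-- The translation operators `τ_h`, acting on continuous functions. They are bundled as a map from
`X` to endomorphisms which turns sums into compositions. -/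
def translation [CommSemiring K] [TopologicalSpace K] [IsTopologicalSemiring K] :
    AddChar X (Module.End K C(X, K)) where
  toFun h := (ContinuousMap.compRightAlgHom K K (ContinuousMap.addRight h)).toLinearMap
  map_zero_eq_one' := by ext; simp
  map_add_eq_mul' g h := by ext f x; simp [add_assoc]

variable {K}

section CommSemiring

variable [CommSemiring K] [TopologicalSpace K] [IsTopologicalSemiring K]

theorem translation_apply (h : X) (f : C(X, K)) (x : X) : translation K h f x = f (x + h) := rfl

theorem coe_translation_pow (h : X) (f : C(X, K)) (k : ℕ) :
    ⇑((translation K h ^ k) f) = fun x => f (x + k • h) := by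
  rw [← AddChar.map_nsmul_eq_pow]
  rfl

theorem continuous_translation_apply (f : C(X, K)) : Continuous fun h => translation K h f :=
  (ContinuousMap.curry ⟨fun p : X × X => f (p.2 + p.1), by fun_prop⟩).continuous

end CommSemiring

theorem exists_aeval_translation_apply_eq_zero [Field K] [TopologicalSpace K]
    [IsTopologicalRing K] {f : C(X, K)} {h : X} {n : ℕ}
    (hspan : Module.finrank K
      (Submodule.span K (Set.range fun k : Fin (n + 1) => fun x => f (x + (k : ℕ) • h))) ≤ n) :
    ∃ p : K[X], p ≠ 0 ∧ aeval (translation K h) p f = 0 := by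
  refine exists_aeval_apply_eq_zero_of_not_linearIndependent (n := n + 1) fun hli => ?_
  have hli' : LinearIndependent K fun k : Fin (n + 1) => ⇑((translation K h ^ (k : ℕ)) f) :=
    hli.map' (ContinuousMap.coeFnLinearMap K) (LinearMap.ker_eq_bot.2 DFunLike.coe_injective)
  simp only [coe_translation_pow] at hli'
  have hcard := finrank_span_eq_card hli'
  rw [Fintype.card_fin] at hcard
  lia

theorem le_comap_translation_of_dense [NontriviallyNormedField K] [CompleteSpace K]
    {V : Submodule K C(X, K)} [FiniteDimensional K V] {s : Set X} (hs : Dense s)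
    (hV : ∀ h ∈ s, V ≤ V.comap (translation K h)) (h : X) : V ≤ V.comap (translation K h) := by
  intro v hv
  have hclosed : IsClosed {h | translation K h v ∈ V} :=
    V.closed_of_finiteDimensional.preimage (continuous_translation_apply v)
  exact hclosed.closure_subset_iff.2 (fun g hg => hV g hg hv) (hs h)

theorem isExpPoly_of_mem_translation_invariant {d : ℕ} {V : Submodule ℂ C(Fin d → ℝ, ℂ)}
    [FiniteDimensional ℂ V] (hV : ∀ h, V ≤ V.comap (translation ℂ h)) {f : C(Fin d → ℝ, ℂ)}
    (hf : f ∈ V) : IsExpPoly f := by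
  have := isExpPoly_apply_of_continuous_orbits (W := V) (subrepresentation (translation ℂ) V hV)
    (fun v => (continuous_translation_apply (v : C(Fin d → ℝ, ℂ))).subtype_mk _)
    ((ContinuousMap.evalCLM ℂ (0 : Fin d → ℝ)).toLinearMap ∘ₗ V.subtype) ⟨f, hf⟩
  simpa [subrepresentation, translation_apply] using this

end Translation

theorem popoviciu_montel_type
    {d s : ℕ} (h : Fin s → (Fin d → ℝ))
    (hdense : Dense ((AddSubgroup.closure (Set.range h) : AddSubgroup (Fin d → ℝ)) : Set (Fin d → ℝ)))
    (f : (Fin d → ℝ) → ℂ) (hf : Continuous f)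
    (n : Fin s → ℕ) (hn : ∀ i, 1 ≤ n i)
    (hspan : ∀ i, Module.finrank ℂ
      (Submodule.span ℂ (Set.range fun k : Fin (n i + 1) =>
        fun x : Fin d → ℝ => f (x + (k : ℕ) • h i))) ≤ n i) :
    IsExpPoly f := by
  have hann (i : Fin s) : ∃ p : ℂ[X], p ≠ 0 ∧ aeval (translation ℂ (h i)) p ⟨f, hf⟩ = 0 :=
    exists_aeval_translation_apply_eq_zero (hspan i)
  have hcomm (i j : Fin s) : Commute (translation ℂ (h i)) (translation ℂ (h j)) := by
    rw [commute_iff_eq, ← AddChar.map_add_eq_mul, add_comm, AddChar.map_add_eq_mul]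
  obtain ⟨V, hfin, hfV, hV⟩ := exists_finiteDimensional_invariant_of_commute _ hcomm _ hann
  have hgroup : ∀ g ∈ AddSubgroup.closure (Set.range h), V ≤ V.comap (translation ℂ g) :=
    fun g hg => le_comap_of_mem_closure _ (Set.forall_mem_range.2 hV) hg
  exact isExpPoly_of_mem_translation_invariant (le_comap_translation_of_dense hdense hgroup) hfV
end

section
/- (Solution of the Popoviciu–Ionescu functional equation in one variable.) Let n be a positive integer and let f : ℝ → ℝ be a continuous function such that for all x, h ∈ ℝ, the determinant of the (n+1)×(n+1) matrix whose (i,j) entry is f(x + (i+j)h), for 0 ≤ i, j ≤ n, equals zero. Then f is an exponential polynomial. -/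
/-- A real function of one variable is an exponential polynomial if it is a finite sum
of terms `P_k(t) * exp(λ_k t)` with `P_k` complex polynomials and `λ_k ∈ ℂ`
(the sum being real-valued). -/
def IsExpPoly1Real (f : ℝ → ℝ) : Prop :=
  ∃ (m : ℕ) (P : Fin m → Polynomial ℂ) (lam : Fin m → ℂ),
    ∀ t : ℝ, (f t : ℂ) = ∑ k, Polynomial.eval (t : ℂ) (P k) * Complex.exp (lam k * t)

/-!
The Hankel determinants `H_n(k) = det (a (k + i + j))_{i,j < n}` of a sequence `a` satisfy the
Desnanot–Jacobi identity `H_{n+1}(k) H_{n-1}(k+2) = H_n(k) H_n(k+2) - H_n(k+1)²`. Hence, if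
`H_{n+1}` is identically zero, then `H_n` is identically zero or vanishes nowhere; so for some
`m ≤ n` the determinant `H_m` vanishes nowhere while `H_{m+1}` is identically zero, and `a` obeys a
linear recurrence of order `m`. Applied to the samples of `f` on a grid `hℤ`, this gives
`det (f (p_i + q_j)) = 0` for all rational, and by continuity for all real, points `p_i`, `q_j`:
the translates of `f` span a space `V` of dimension at most `n`.

Being finite-dimensional, `V` is closed under pointwise limits. It therefore contains the means
`h⁻¹ ∫_0^h g(t + s) ds` of each of its elements `g`. These means are differentiable and converge to
`g`, which is therefore differentiable, the subspace of differentiable elements of `V` being closed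
as well. Moreover `V` contains the derivative of `g`, as a limit of difference quotients, and
decomposing `V` into generalized eigenspaces of `d/dt` yields the exponential polynomials.
-/

open Module Submodule Filter Topology

section LinearAlgebra

variable {K V ι α : Type*} [Field K] [AddCommGroup V] [Module K V]

theorem linearIndependent_iff_exists_det_ne_zero [Fintype ι] [DecidableEq ι] {g : ι → α → K} :
    LinearIndependent K g ↔ ∃ p : ι → α, (Matrix.of fun i j => g i (p j)).det ≠ 0 := by
  constructor
  · intro hg
    obtain ⟨κ, p, -, hspan, hli⟩ := exists_linearIndependent' K (flip g)
    rw [span_flip_eq_top_iff_linearIndependent.mpr hg] at hspan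
    let b := Basis.mk hli hspan.ge
    let e := (Pi.basisFun K ι).indexEquiv b
    have hcols : LinearIndependent K (Matrix.of fun i j => g i (p (e j))).col :=
      hli.comp e e.injective
    rw [Matrix.linearIndependent_cols_iff_isUnit, Matrix.isUnit_iff_isUnit_det] at hcols
    exact ⟨p ∘ e, hcols.ne_zero⟩
  · rintro ⟨p, hp⟩
    exact .of_comp (LinearMap.funLeft K K p) (Matrix.linearIndependent_rows_of_det_ne_zero hp)

theorem finiteDimensional_span_range_of_not_linearIndependent {v : ι → V} {n : ℕ}
    (h : ∀ q : Fin n → ι, ¬ LinearIndependent K fun i => v (q i)) :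
    FiniteDimensional K (span K (Set.range v)) := by
  obtain ⟨κ, a, -, hspan, hli⟩ := exists_linearIndependent' K v
  have : Finite κ := by
    by_contra hinf
    rw [not_finite_iff_infinite] at hinf
    let e : Fin n ↪ κ := Fin.valEmbedding.trans (Infinite.natEmbedding κ)
    exact h (a ∘ e) (hli.comp e e.injective)
  exact hspan ▸ FiniteDimensional.span_of_finite K (Set.finite_range _)

theorem card_le_card_of_linearIndependent_of_mem_span_range {κ : Type*} [Fintype ι] [Fintype κ]
    {v : ι → V} {w : κ → V} (hv : LinearIndependent K v)
    (hvw : ∀ i, v i ∈ span K (Set.range w)) : Fintype.card ι ≤ Fintype.card κ := by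
  have := FiniteDimensional.span_of_finite K (Set.finite_range w)
  calc Fintype.card ι = finrank K (span K (Set.range v)) := (finrank_span_eq_card hv).symm
    _ ≤ finrank K (span K (Set.range w)) :=
      finrank_mono (span_le.mpr (Set.range_subset_iff.mpr hvw))
    _ ≤ Fintype.card κ := finrank_range_le_card w

theorem mem_span_of_linearIndependent_consecutive {r : ℤ → V} {n : ℕ}
    (hli : ∀ k, LinearIndependent K fun i : Fin n => r (k + i))
    (hld : ∀ k, ¬ LinearIndependent K fun i : Fin (n + 1) => r (k + i)) (k : ℤ) :
    r k ∈ span K (Set.range fun i : Fin n => r i) := by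
  let U : ℤ → Submodule K V := fun k => span K (Set.range fun i : Fin n => r (k + i))
  have (k : ℤ) : FiniteDimensional K (U k) :=
    FiniteDimensional.span_of_finite K (Set.finite_range _)
  have hnext (k : ℤ) : r (k + n) ∈ U k := by
    have := hld k
    rw [linearIndependent_finSucc', not_and, not_not] at this
    simpa [U, Fin.init_def] using this (by simpa [Fin.init_def] using hli k)
  have hU : Function.Periodic U 1 := fun k => by
    refine eq_of_le_of_finrank_eq (span_le.mpr ?_) ?_
    · rintro _ ⟨i, rfl⟩
      obtain hi | hi := Nat.lt_or_eq_of_le (Nat.succ_le_of_lt i.isLt)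
      · exact subset_span ⟨⟨i + 1, hi⟩, congrArg r (by push_cast; ring)⟩
      · have hlast : r (k + 1 + i) = r (k + n) := congrArg r (by omega)
        simpa only [hlast, SetLike.mem_coe] using hnext k
    · rw [finrank_span_eq_card (hli _), finrank_span_eq_card (hli _)]
  have hk : U (k - n) = U 0 := by simpa using hU.int_mul_eq (k - n)
  have hmem := hnext (k - n)
  rw [hk, sub_add_cancel] at hmem
  simpa [U] using hmem

end LinearAlgebra

section Adjugate

variable {R m : Type*} [CommRing R] [IsDomain R] [Fintype m] [DecidableEq m]

theorem adjugate_apply_mul_comm_of_mulVec_eq_zero {A : Matrix m m R} {v : m → R}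
    (hv : A.mulVec v = 0) (i j k : m) : A.adjugate i j * v k = A.adjugate k j * v i := by
  obtain rfl | hv0 := eq_or_ne v 0
  · simp
  have hrow : (v k • Pi.single i 1 - v i • Pi.single k 1) ⬝ᵥ v = 0 := by
    simp [sub_dotProduct, mul_comm]
  have hker : (A.updateRow j (v k • Pi.single i 1 - v i • Pi.single k 1)).mulVec v = 0 := by
    ext l
    obtain rfl | hl := eq_or_ne l j
    · simpa only [Matrix.mulVec, Matrix.updateRow_self, Pi.zero_apply] using hrow
    · simpa only [Matrix.mulVec, Matrix.updateRow_ne hl] using congrFun hv l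
  have hdet := Matrix.exists_mulVec_eq_zero_iff.mp ⟨v, hv0, hker⟩
  rw [sub_eq_add_neg, ← neg_smul, Matrix.det_updateRow_add, Matrix.det_updateRow_smul,
    Matrix.det_updateRow_smul, ← Matrix.adjugate_apply, ← Matrix.adjugate_apply] at hdet
  linear_combination hdet

theorem adjugate_apply_mul_adjugate_apply_of_det_eq_zero {A : Matrix m m R}
    (hA : A.det = 0) (i j k l : m) :
    A.adjugate i j * A.adjugate k l = A.adjugate i l * A.adjugate k j := by
  obtain ⟨v, hv0, hv⟩ := Matrix.exists_mulVec_eq_zero_iff.mpr hA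
  obtain ⟨s, hs⟩ := Function.ne_iff.mp hv0
  rw [← mul_left_inj' (mul_ne_zero hs hs)]
  have h := adjugate_apply_mul_comm_of_mulVec_eq_zero hv
  linear_combination A.adjugate i j * v s * h k l s + A.adjugate s l * v k * h i j s -
    A.adjugate i l * v s * h k j s - A.adjugate s j * v k * h i l s

end Adjugate

section Hankel

/-- The `n × n` window, starting at index `k`, of the infinite Hankel matrix of a two-sided
sequence `a`: the matrix `(a (k + i + j))` with `0 ≤ i, j < n`. -/
def hankel {R : Type*} (a : ℤ → R) (n : ℕ) (k : ℤ) : Matrix (Fin n) (Fin n) R :=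
  Matrix.of fun i j => a (k + i + j)

theorem hankel_succ_submatrix {R : Type*} (a : ℤ → R) {n s : ℕ} (k : ℤ)
    {f g : Fin n → Fin (n + 1)} (hfg : ∀ i j, (f i + g j : ℕ) = i + j + s) :
    (hankel a (n + 1) k).submatrix f g = hankel a n (k + s) := by
  ext i j
  refine congrArg a ?_
  have := hfg i j
  omega

theorem det_hankel_mul_det_hankel {R : Type*} [CommRing R] [IsDomain R] {a : ℤ → R} {n : ℕ}
    {k : ℤ} (h : (hankel a (n + 1) k).det = 0) :
    (hankel a n k).det * (hankel a n (k + 2)).det = (hankel a n (k + 1)).det ^ 2 := by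
  have hadj := adjugate_apply_mul_adjugate_apply_of_det_eq_zero h (Fin.last n) (Fin.last n) 0 0
  simp only [Matrix.adjugate_fin_succ_eq_det_submatrix, Fin.succAbove_last, Fin.succAbove_zero]
    at hadj
  rw [hankel_succ_submatrix a k (s := 0) (by simp),
    hankel_succ_submatrix a k (f := Fin.succ) (g := Fin.succ) (s := 2) (by simp; omega),
    hankel_succ_submatrix a k (f := Fin.succ) (s := 1) (by simp; omega),
    hankel_succ_submatrix a k (g := Fin.succ) (s := 1) (by simp; omega)] at hadj
  simpa [mul_mul_mul_comm, ← pow_add, ← two_mul, sq] using hadj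

theorem det_hankel_ne_zero_of_det_hankel_succ_eq_zero {R : Type*} [CommRing R] [IsDomain R]
    {a : ℤ → R} {n : ℕ} (h : ∀ k, (hankel a (n + 1) k).det = 0) {k : ℤ}
    (hk : (hankel a n k).det ≠ 0) (l : ℤ) : (hankel a n l).det ≠ 0 := by
  have hmul (k : ℤ) (hk : (hankel a n (k + 1)).det ≠ 0) :
      (hankel a n k).det * (hankel a n (k + 2)).det ≠ 0 :=
    det_hankel_mul_det_hankel (h k) ▸ pow_ne_zero 2 hk
  obtain ⟨d, rfl⟩ : ∃ d, l = k + d := ⟨l - k, by ring⟩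
  induction d using Int.induction_on with
  | zero => rwa [add_zero]
  | succ d ih =>
    convert! right_ne_zero_of_mul (hmul (k + d - 1) (by rwa [sub_add_cancel])) using 3
    ring
  | pred d ih =>
    refine left_ne_zero_of_mul (hmul (k + (-d - 1)) ?_)
    convert! ih using 3
    ring

theorem exists_det_hankel_ne_zero_and_det_hankel_succ_eq_zero {R : Type*} [CommRing R] [IsDomain R]
    {a : ℤ → R} {n : ℕ} (h : ∀ k, (hankel a (n + 1) k).det = 0) :
    ∃ m ≤ n, (∀ k, (hankel a m k).det ≠ 0) ∧ ∀ k, (hankel a (m + 1) k).det = 0 := by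
  induction n with
  | zero => exact ⟨0, le_rfl, fun k => by simp, h⟩
  | succ n ih =>
    by_cases hn : ∀ k, (hankel a (n + 1) k).det = 0
    · obtain ⟨m, hm, hdet⟩ := ih hn
      exact ⟨m, hm.trans n.le_succ, hdet⟩
    · obtain ⟨k, hk⟩ := not_forall.mp hn
      exact ⟨n + 1, le_rfl, det_hankel_ne_zero_of_det_hankel_succ_eq_zero h hk, h⟩

variable {K : Type*} [Field K] {a : ℤ → K} {n : ℕ}

theorem hankel_row_mem_span (h : ∀ k, (hankel a n k).det ≠ 0)
    (hsucc : ∀ k, (hankel a (n + 1) k).det = 0) (k : ℤ) :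
    (fun j : Fin (n + 1) => a (k + j)) ∈
      span K (Set.range fun (i : Fin n) (j : Fin (n + 1)) => a (i + j)) := by
  refine mem_span_of_linearIndependent_consecutive (r := fun k (j : Fin (n + 1)) => a (k + j))
    (fun k => ?_) (fun k hli => ?_) k
  · exact linearIndependent_iff_exists_det_ne_zero.mpr ⟨Fin.castSucc, h k⟩
  · have hunit := (hankel a (n + 1) k).linearIndependent_rows_iff_isUnit.mp hli
    exact ((Matrix.isUnit_iff_isUnit_det _).mp hunit).ne_zero (hsucc k)

theorem translate_mem_span_of_det_hankel (h : ∀ k, (hankel a n k).det ≠ 0)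
    (hsucc : ∀ k, (hankel a (n + 1) k).det = 0) (q : ℤ) :
    (fun l => a (l + q)) ∈ span K (Set.range fun (i : Fin n) (l : ℤ) => a (l + i)) := by
  refine mem_span_of_linearIndependent_consecutive (r := fun q l => a (l + q)) (fun k => ?_)
    (fun k hli => ?_) q
  · refine linearIndependent_iff_exists_det_ne_zero.mpr ⟨fun j => (j : ℤ), ?_⟩
    convert! h k using 2
    ext i j
    exact congrArg a (by ring)
  · obtain ⟨p, hp⟩ := linearIndependent_iff_exists_det_ne_zero.mp hli
    have hrows : LinearIndependent K fun i (j : Fin (n + 1)) => a (p i + k + j) := by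
      have hcols : LinearIndependent K fun i (j : Fin (n + 1)) => a (p i + (k + j)) :=
        Matrix.linearIndependent_cols_of_det_ne_zero hp
      simpa only [add_assoc] using hcols
    have hcard := card_le_card_of_linearIndependent_of_mem_span_range hrows fun i =>
      hankel_row_mem_span h hsucc (p i + k)
    simp at hcard

theorem det_add_eq_zero_of_det_hankel_eq_zero (h : ∀ k, (hankel a (n + 1) k).det = 0)
    (p q : Fin (n + 1) → ℤ) : (Matrix.of fun i j => a (p i + q j)).det = 0 := by
  obtain ⟨m, hmn, hm, hm'⟩ := exists_det_hankel_ne_zero_and_det_hankel_succ_eq_zero h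
  by_contra hdet
  rw [← Matrix.det_transpose] at hdet
  have hli : LinearIndependent K fun (j : Fin (n + 1)) (l : ℤ) => a (l + q j) :=
    linearIndependent_iff_exists_det_ne_zero.mpr ⟨p, hdet⟩
  have hcard := card_le_card_of_linearIndependent_of_mem_span_range hli fun j =>
    translate_mem_span_of_det_hankel hm hm' (q j)
  simp only [Fintype.card_fin] at hcard
  omega

end Hankel

section Continuity

theorem exists_forall_eq_intCast_mul {ι : Type*} [Finite ι] (x : ι → ℚ) :
    ∃ (h : ℚ) (k : ι → ℤ), ∀ i, x i = k i * h := by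
  obtain ⟨b, hb⟩ := IsLocalization.exist_integer_multiples_of_finite (nonZeroDivisors ℤ) x
  choose k hk using hb
  have hb0 : (b : ℚ) ≠ 0 := Int.cast_ne_zero.mpr (nonZeroDivisors.coe_ne_zero b)
  refine ⟨(b : ℚ)⁻¹, k, fun i => ?_⟩
  have : (k i : ℚ) = b * x i := by simpa using hk i
  rw [this]
  field_simp

theorem det_add_eq_zero_of_continuous {K : Type*} [Field K] [TopologicalSpace K]
    [IsTopologicalRing K] [T2Space K] {f : ℝ → K} (hf : Continuous f) {n : ℕ}
    (hdet : ∀ x h : ℝ, (Matrix.of fun i j : Fin (n + 1) => f (x + ((i : ℕ) + (j : ℕ)) * h)).det = 0)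
    (p q : Fin (n + 1) → ℝ) : (Matrix.of fun i j => f (p i + q j)).det = 0 := by
  have hrat (x : Fin (n + 1) ⊕ Fin (n + 1) → ℚ) :
      (Matrix.of fun i j => f (x (.inl i) + x (.inr j))).det = 0 := by
    obtain ⟨h, k, hk⟩ := exists_forall_eq_intCast_mul x
    have hgrid := det_add_eq_zero_of_det_hankel_eq_zero (a := fun l => f (l * h)) (n := n)
      (fun l => ?_) (fun i => k (.inl i)) (fun j => k (.inr j))
    · simpa [hk, add_mul] using hgrid
    · convert! hdet (l * h) h using 2
      ext i j
      exact congrArg f (by push_cast; ring)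
  have hcont : Continuous fun x : Fin (n + 1) ⊕ Fin (n + 1) → ℝ =>
      (Matrix.of fun i j => f (x (.inl i) + x (.inr j))).det :=
    Continuous.matrix_det <| continuous_matrix fun i j => by
      simp only [Matrix.of_apply]
      fun_prop
  have hdense : DenseRange (Pi.map fun (_ : Fin (n + 1) ⊕ Fin (n + 1)) (r : ℚ) => (r : ℝ)) :=
    DenseRange.piMap fun _ => Rat.denseRange_cast
  exact congrFun (hdense.equalizer hcont continuous_const (funext hrat)) (Sum.elim p q)

end Continuity

section ExponentialPolynomial

open Polynomial

/-- The space of complex-valued exponential polynomials on the real line, spanned by the functions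
`t ↦ P(t) exp(λ t)`; a pair `(P, λ)` indexes its generators. -/
def exponentialPolynomials : Submodule ℂ (ℝ → ℂ) :=
  span ℂ (Set.range fun (p : ℂ[X] × ℂ) (t : ℝ) => p.1.eval (t : ℂ) * Complex.exp (p.2 * t))

theorem isExpPoly1Real_of_mem_exponentialPolynomials {f : ℝ → ℝ}
    (hf : (fun t => (f t : ℂ)) ∈ exponentialPolynomials) : IsExpPoly1Real f := by
  obtain ⟨m, c, g, hg⟩ := mem_span_set'.mp hf
  choose p hp using fun i => (g i).2
  refine ⟨m, fun i => C (c i) * (p i).1, fun i => (p i).2, fun t => ?_⟩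
  rw [← congrFun hg t]
  simp [← hp, mul_assoc]

theorem polynomial_derivative_surjective {K : Type*} [Field K] [CharZero K] :
    Function.Surjective (derivative : K[X] → K[X]) := by
  intro P
  induction P using Polynomial.induction_on' with
  | add P₁ P₂ h₁ h₂ =>
    obtain ⟨⟨Q₁, rfl⟩, Q₂, rfl⟩ := And.intro h₁ h₂
    exact ⟨Q₁ + Q₂, derivative_add⟩
  | monomial n c =>
    refine ⟨monomial (n + 1) (c / (n + 1)), ?_⟩
    rw [derivative_monomial]
    simp [div_mul_cancel₀ c (Nat.cast_add_one_ne_zero n)]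

theorem exists_polynomial_mul_exp_of_hasDerivAt {g : ℝ → ℂ} {μ : ℂ} {P : ℂ[X]}
    (hg : ∀ t : ℝ, HasDerivAt g (μ * g t + P.eval (t : ℂ) * Complex.exp (μ * t)) t) :
    ∃ Q : ℂ[X], ∀ t : ℝ, g t = Q.eval (t : ℂ) * Complex.exp (μ * t) := by
  obtain ⟨Q, rfl⟩ := polynomial_derivative_surjective P
  have hexp (t : ℝ) : HasDerivAt (fun t : ℝ => Complex.exp (-(μ * t)))
      (Complex.exp (-(μ * t)) * -μ) t := by
    simpa using (((hasDerivAt_id (t : ℂ)).const_mul μ).neg.cexp).comp_ofReal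
  have hderiv (t : ℝ) :
      HasDerivAt (fun t : ℝ => g t * Complex.exp (-(μ * t)) - Q.eval (t : ℂ)) 0 t := by
    refine (((hg t).mul (hexp t)).sub (Q.hasDerivAt (t : ℂ)).comp_ofReal).congr_deriv ?_
    have hinv : Complex.exp (μ * t) * Complex.exp (-(μ * t)) = 1 := by
      rw [← Complex.exp_add, add_neg_cancel, Complex.exp_zero]
    linear_combination Q.derivative.eval (t : ℂ) * hinv
  refine ⟨Q + C (g 0 - Q.eval 0), fun t => ?_⟩
  have hconst := is_const_of_deriv_eq_zero (fun t => (hderiv t).differentiableAt)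
    (fun t => (hderiv t).deriv) t 0
  simp only [Complex.exp_neg, Complex.ofReal_zero, mul_zero, Complex.exp_zero, inv_one,
    mul_one] at hconst
  rw [eval_add, eval_C, ← hconst]
  field_simp [Complex.exp_ne_zero]
  ring

variable {V : Submodule ℂ (ℝ → ℂ)} {D : End ℂ V}

theorem exists_polynomial_mul_exp_of_pow_apply_eq_zero
    (hD : ∀ (g : V) (t : ℝ), HasDerivAt (g : ℝ → ℂ) ((D g : ℝ → ℂ) t) t) {μ : ℂ} {k : ℕ} {g : V}
    (hg : ((D - algebraMap ℂ (End ℂ V) μ) ^ k) g = 0) :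
    ∃ P : ℂ[X], ∀ t : ℝ, (g : ℝ → ℂ) t = P.eval (t : ℂ) * Complex.exp (μ * t) := by
  induction k generalizing g with
  | zero => exact ⟨0, fun t => by simp_all⟩
  | succ k ih =>
    obtain ⟨P, hP⟩ := ih (g := D g - μ • g) (by simpa [pow_succ] using hg)
    refine exists_polynomial_mul_exp_of_hasDerivAt (P := P) fun t => ?_
    rw [← hP]
    simpa using hD g t

theorem le_exponentialPolynomials_of_hasDerivAt [FiniteDimensional ℂ V]
    (hD : ∀ (g : V) (t : ℝ), HasDerivAt (g : ℝ → ℂ) ((D g : ℝ → ℂ) t) t) :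
    V ≤ exponentialPolynomials := by
  suffices h : ⊤ ≤ exponentialPolynomials.comap V.subtype from
    fun g hg => h (mem_top (x := ⟨g, hg⟩))
  rw [← End.iSup_maxGenEigenspace_eq_top D]
  refine iSup_le fun μ g hg => ?_
  obtain ⟨k, hk⟩ := (End.mem_maxGenEigenspace _ _ _).mp hg
  obtain ⟨P, hP⟩ := exists_polynomial_mul_exp_of_pow_apply_eq_zero hD
    (by simpa [Algebra.algebraMap_eq_smul_one] using hk)
  exact subset_span ⟨(P, μ), funext fun t => (hP t).symm⟩

end ExponentialPolynomial

section TranslationInvariant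

variable {V : Submodule ℂ (ℝ → ℂ)} [FiniteDimensional ℂ V]

theorem deriv_mem_of_translate_mem (htrans : ∀ g ∈ V, ∀ s, (fun t => g (t + s)) ∈ V)
    {g g' : ℝ → ℂ} (hg : g ∈ V) (hderiv : ∀ t, HasDerivAt g (g' t) t) : g' ∈ V := by
  have hlim : Tendsto (fun (s : ℝ) t => (s : ℂ)⁻¹ * (g (t + s) - g t)) (𝓝[≠] 0) (𝓝 g') :=
    tendsto_pi_nhds.mpr fun t => by simpa using (hderiv t).tendsto_slope_zero
  refine V.closed_of_finiteDimensional.mem_of_tendsto hlim (.of_forall fun s => ?_)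
  exact V.smul_mem _ (V.sub_mem (htrans g hg s) hg)

theorem integral_translate_mem
    (htrans : ∀ g ∈ V, ∀ s, (fun t => g (t + s)) ∈ V) {g : ℝ → ℂ} (hg : g ∈ V)
    (hcont : Continuous g) (a b : ℝ) : (fun t => ∫ s in a..b, g (t + s)) ∈ V := by
  let γ : ℝ → V := fun s => ⟨fun t => g (t + s), htrans g hg s⟩
  have hγ : Continuous γ := by
    refine Continuous.subtype_mk (continuous_pi fun t => ?_) _
    fun_prop
  let e := finBasis ℂ V
  have hcoord (i) : Continuous fun s => e.coord i (γ s) :=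
    (LinearMap.continuous_of_finiteDimensional (e.coord i)).comp hγ
  have hexpand (t s : ℝ) : g (t + s) = ∑ i, e.coord i (γ s) * (e i : ℝ → ℂ) t := by
    have h := congrArg (fun v : V => (v : ℝ → ℂ) t) (e.sum_repr (γ s))
    simpa only [Submodule.coe_sum, Submodule.coe_smul, Finset.sum_apply, Pi.smul_apply,
      smul_eq_mul, Basis.coord_apply] using h.symm
  have hint : (fun t => ∫ s in a..b, g (t + s)) =
      ∑ i, (∫ s in a..b, e.coord i (γ s)) • (e i : ℝ → ℂ) := by
    ext t
    simp only [hexpand, Finset.sum_apply, Pi.smul_apply, smul_eq_mul]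
    rw [intervalIntegral.integral_finsetSum fun i _ =>
      ((hcoord i).mul_const _).intervalIntegrable a b]
    simp only [intervalIntegral.integral_mul_const]
  exact hint ▸ V.sum_mem fun i _ => V.smul_mem _ (e i).2

theorem hasDerivAt_integral_translate {E : Type*} [NormedAddCommGroup E] [NormedSpace ℝ E]
    [CompleteSpace E] {g : ℝ → E} (hg : Continuous g) (a b t : ℝ) :
    HasDerivAt (fun t => ∫ s in a..b, g (t + s)) (g (t + b) - g (t + a)) t := by
  have hprim (c : ℝ) : HasDerivAt (fun t => ∫ u in (0 : ℝ)..t + c, g u) (g (t + c)) t :=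
    (hg.integral_hasStrictDerivAt 0 (t + c)).hasDerivAt.comp_add_const t c
  refine ((hprim b).sub (hprim a)).congr_of_eventuallyEq (.of_forall fun t => ?_)
  simp [intervalIntegral.integral_interval_sub_left (hg.intervalIntegrable _ _)
    (hg.intervalIntegrable _ _), intervalIntegral.integral_comp_add_left]

theorem differentiable_of_translate_mem
    (htrans : ∀ g ∈ V, ∀ s, (fun t => g (t + s)) ∈ V) {g : ℝ → ℂ} (hg : g ∈ V)
    (hcont : Continuous g) : Differentiable ℝ g := by
  let W : Submodule ℂ (ℝ → ℂ) :=
    { carrier := {g | Differentiable ℝ g}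
      add_mem' := fun hg hh => Differentiable.add hg hh
      zero_mem' := differentiable_const 0
      smul_mem' := fun c _ hg => Differentiable.const_smul hg c }
  have : FiniteDimensional ℂ (V ⊓ W : Submodule ℂ (ℝ → ℂ)) := finiteDimensional_inf_left V W
  have hlim : Tendsto (fun (h : ℝ) t => (h : ℂ)⁻¹ * ∫ s in (0 : ℝ)..h, g (t + s)) (𝓝[≠] 0) (𝓝 g) :=
    tendsto_pi_nhds.mpr fun t => by
      have hderiv : HasDerivAt (fun h => ∫ s in (0 : ℝ)..h, g (t + s)) (g t) 0 := by
        simpa using ((hcont.comp (continuous_const_add t)).integral_hasStrictDerivAt 0 0).hasDerivAt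
      simpa using hderiv.tendsto_slope_zero
  refine ((V ⊓ W).closed_of_finiteDimensional.mem_of_tendsto hlim (.of_forall fun h => ?_)).2
  exact (V ⊓ W).smul_mem _ ⟨integral_translate_mem htrans hg hcont 0 h,
    fun t => (hasDerivAt_integral_translate hcont 0 h t).differentiableAt⟩

theorem le_exponentialPolynomials_of_translate_mem (hcont : ∀ g ∈ V, Continuous g)
    (htrans : ∀ g ∈ V, ∀ s, (fun t => g (t + s)) ∈ V) : V ≤ exponentialPolynomials := by
  have hdiff (g : V) : Differentiable ℝ (g : ℝ → ℂ) :=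
    differentiable_of_translate_mem htrans g.2 (hcont g g.2)
  let D : End ℂ V :=
    { toFun := fun g => ⟨deriv g,
        deriv_mem_of_translate_mem htrans g.2 fun t => (hdiff g t).hasDerivAt⟩
      map_add' := fun g h => Subtype.ext <| funext fun t => deriv_add (hdiff g t) (hdiff h t)
      map_smul' := fun c g => Subtype.ext <| funext fun t => deriv_const_smul c (hdiff g t) }
  exact le_exponentialPolynomials_of_hasDerivAt (D := D) fun g t => (hdiff g t).hasDerivAt

theorem mem_exponentialPolynomials_of_finiteDimensional_span_translates {f : ℝ → ℂ}
    (hf : Continuous f)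
    [FiniteDimensional ℂ (span ℂ (Set.range fun s t : ℝ => f (t + s)))] :
    f ∈ exponentialPolynomials := by
  refine le_exponentialPolynomials_of_translate_mem
    (V := span ℂ (Set.range fun s t : ℝ => f (t + s))) (fun g hg => ?_)
    (fun g hg s => ?_) (subset_span ⟨0, by simp⟩)
  · induction hg using span_induction with
    | mem g hg => obtain ⟨s, rfl⟩ := hg; fun_prop
    | zero => exact continuous_const
    | add g h _ _ hg hh => exact hg.add hh
    | smul c g _ hg => exact hg.const_smul c
  · refine (span_le (p := (span ℂ _).comap (LinearMap.funLeft ℂ ℂ (· + s)))).mpr ?_ hg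
    rintro _ ⟨s', rfl⟩
    exact subset_span ⟨s + s', funext fun t => congrArg f (add_assoc t s s').symm⟩

end TranslationInvariant

theorem popoviciu_ionescu_one_variable_general (n : ℕ) (f : ℝ → ℂ) (hf : Continuous f)
    (heq : ∀ x h : ℝ,
      Matrix.det (fun i j : Fin (n + 1) => f (x + ((i : ℕ) + (j : ℕ)) * h)) = 0) :
    f ∈ exponentialPolynomials := by
  have hdep (q : Fin (n + 1) → ℝ) : ¬ LinearIndependent ℂ fun i t => f (t + q i) := fun hli => by
    obtain ⟨p, hp⟩ := linearIndependent_iff_exists_det_ne_zero.mp hli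
    have hpq := det_add_eq_zero_of_continuous hf heq p q
    exact hp ((Matrix.det_transpose _).symm.trans hpq)
  have := finiteDimensional_span_range_of_not_linearIndependent (v := fun s t : ℝ => f (t + s)) hdep
  exact mem_exponentialPolynomials_of_finiteDimensional_span_translates hf

theorem popoviciu_ionescu_one_variable
    (n : ℕ) (hn : 1 ≤ n) (f : ℝ → ℝ) (hf : Continuous f)
    (heq : ∀ x h : ℝ,
      Matrix.det (fun i j : Fin (n + 1) => f (x + ((i : ℕ) + (j : ℕ)) * h)) = 0) :
    IsExpPoly1Real f := by
  refine isExpPoly1Real_of_mem_exponentialPolynomials <|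
    popoviciu_ionescu_one_variable_general n _ (Complex.continuous_ofReal.comp hf) fun x h => ?_
  exact (Complex.ofRealHom.map_det _).symm.trans ((congrArg _ (heq x h)).trans (map_zero _))
end

section
/- Let n be a positive integer and let f : ℝ^d → ℂ be a continuous function satisfying the Popoviciu–Ionescu equation of order n in d variables: for all x, h ∈ ℝ^d, the determinant of the (n+1)×(n+1) matrix whose (i,j) entry is f(x + (i+j)h), 0 ≤ i, j ≤ n, equals zero. Then the restriction of f to any line is an exponential polynomial: for every x_0, h_0 ∈ ℝ^d, the function t ↦ f(x_0 + t h_0) is an exponential polynomial on ℝ. -/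
/-- `g : ℝ → ℂ` is an exponential polynomial: a finite sum of terms
`Q_j(t) * exp(μ_j t)` with `Q_j` complex polynomials and `μ_j ∈ ℂ`. -/
def IsExpPoly1 (g : ℝ → ℂ) : Prop :=
  ∃ (m : ℕ) (Q : Fin m → Polynomial ℂ) (mu : Fin m → ℂ),
    ∀ t : ℝ, g t = ∑ j, Polynomial.eval (t : ℂ) (Q j) * Complex.exp (mu j * t)

/-!
On a line, sample `F` on the progression `h ℤ`. All contiguous Hankel determinants of order `n + 1`
of the resulting sequence vanish, so, as Kronecker observed, the sequence satisfies a two-sided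
linear recurrence of order at most `n`, and hence all minors `det (F (pᵢ h + qⱼ h))` of order
`n + 1` vanish, not only the contiguous ones. Letting `h` range over the rationals, continuity gives
`det (F (sᵢ + tⱼ)) = 0` for all real `sᵢ`, `tⱼ`. The kernel `(x, y) ↦ F (x + y)` then has finite
rank, so `F` is a coefficient of a continuous finite-dimensional representation of `ℝ`, that is, of
`t ↦ exp (t A)` for some matrix `A`. On the generalized eigenspace of `A` for `μ` this is
`exp (μ t)` times a polynomial in `t`.
-/

open Matrix Set

section HankelKernel

variable {G R ι κ : Type*}

/-- The Hankel matrix of `f`, indexed by all of `G`; its submatrices are the matrices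
`(f (pᵢ + qⱼ))`. -/
def hankelKernel [Add G] (f : G → R) : Matrix G G R :=
  Matrix.of fun x y => f (x + y)

@[simp]
lemma hankelKernel_apply [Add G] (f : G → R) (x y : G) : hankelKernel f x y = f (x + y) :=
  rfl

/-- The linear combination of translates of `a` with coefficients `c` and steps `q`. -/
def translateSum [Add G] [Semiring R] [Fintype ι] (c : ι → R) (q : ι → G) (a : G → R) (x : G) : R :=
  ∑ j, c j * a (x + q j)

lemma hankelKernel_submatrix_mulVec [Add G] [CommSemiring R] [Fintype ι] (a : G → R) (p : κ → G)
    (q : ι → G) (c : ι → R) :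
    (hankelKernel a).submatrix p q *ᵥ c = translateSum c q a ∘ p := by
  ext i
  simp [mulVec, dotProduct, translateSum, mul_comm]

lemma translateSum_comm [AddCommMonoid G] [CommSemiring R] [Fintype ι] [Fintype κ] (c : ι → R)
    (p : ι → G) (d : κ → R) (q : κ → G) (a : G → R) :
    translateSum c p (translateSum d q a) = translateSum d q (translateSum c p a) := by
  ext x
  simp only [translateSum, Finset.mul_sum]
  rw [Finset.sum_comm]
  refine Finset.sum_congr rfl fun j _ => Finset.sum_congr rfl fun i _ => ?_
  rw [add_right_comm, mul_left_comm]

end HankelKernel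

section Window

variable {M : Type*} [Zero M] {b : ℤ → M} {k : ℕ} {m : ℤ}

lemma eqOn_zero_Ico_succ (hb : EqOn b 0 (Ico m (m + k))) (hlast : b (m + k) = 0) :
    EqOn b 0 (Ico (m + 1) (m + 1 + k)) := by
  rintro x ⟨hmx, hxm⟩
  obtain hx | rfl : x < m + k ∨ x = m + k := by omega
  exacts [hb ⟨by omega, hx⟩, hlast]

lemma eqOn_zero_Ico_pred (hb : EqOn b 0 (Ico (m + 1) (m + 1 + k))) (hfirst : b m = 0) :
    EqOn b 0 (Ico m (m + k)) := by
  rintro x ⟨hmx, hxm⟩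
  obtain hx | rfl : m + 1 ≤ x ∨ x = m := by omega
  exacts [hb ⟨hx, by omega⟩, hfirst]

lemma Ico_add_one_subset_Icc : Ico (m + 1) (m + 1 + k) ⊆ Icc m (m + k) :=
  fun _ hx => ⟨by linarith [hx.1], by linarith [hx.2]⟩

lemma eq_zero_of_eqOn_Ico
    (right : ∀ m, EqOn b 0 (Ico m (m + k)) → b (m + k) = 0)
    (left : ∀ m, EqOn b 0 (Ico (m + 1) (m + 1 + k)) → b m = 0)
    (hb : EqOn b 0 (Ico m (m + k))) : b = 0 := by
  have window (x : ℤ) : EqOn b 0 (Ico x (x + k)) := by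
    induction x using Int.inductionOn' (b := m) with
    | zero => exact hb
    | succ x _ ih => exact eqOn_zero_Ico_succ ih (right x ih)
    | pred x _ ih =>
      rw [← sub_add_cancel x 1] at ih
      exact eqOn_zero_Ico_pred ih (left _ ih)
  exact funext fun x => left x (window (x + 1))

end Window

section Recurrence

/-- The operator `∑ⱼ cⱼ Tʲ` on two-sided sequences, where `T` is the unit shift. -/
def differenceOp {R : Type*} [Semiring R] {k : ℕ} (c : Fin k → R) : (ℤ → R) → ℤ → R :=
  translateSum c fun j => (j : ℤ)

/-- The `k × k` Hankel matrix `(a (m + i + j))` of a two-sided sequence. -/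
def hankelBlock {R : Type*} (a : ℤ → R) (k : ℕ) (m : ℤ) : Matrix (Fin k) (Fin k) R :=
  (hankelKernel a).submatrix (fun i => m + (i : ℤ)) fun j => (j : ℤ)

variable {R ι : Type*} [CommRing R] {a b : ℤ → R} {k : ℕ} {m : ℤ}

lemma differenceOp_eq_init_add_last (w : Fin (k + 1) → R) (b : ℤ → R) (m : ℤ) :
    differenceOp w b m = differenceOp (Fin.init w) b m + w (Fin.last k) * b (m + k) := by
  simp [differenceOp, translateSum, Fin.sum_univ_castSucc, Fin.init]

lemma differenceOp_eq_zero_add_tail (w : Fin (k + 1) → R) (b : ℤ → R) (m : ℤ) :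
    differenceOp w b m = w 0 * b m + differenceOp (Fin.tail w) b (m + 1) := by
  simp [differenceOp, translateSum, Fin.sum_univ_succ, Fin.tail, add_comm, add_left_comm]

lemma differenceOp_eq_zero_of_eqOn (c : Fin k → R) (hb : EqOn b 0 (Ico m (m + k))) :
    differenceOp c b m = 0 := by
  rw [differenceOp, translateSum]
  exact Finset.sum_eq_zero fun j _ => by rw [hb ⟨by omega, by omega⟩, Pi.zero_apply, mul_zero]

variable [IsDomain R]

lemma eq_zero_right_of_differenceOp_eq_zero {w : Fin (k + 1) → R} (hw : w (Fin.last k) ≠ 0)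
    (h : differenceOp w b m = 0) (hb : EqOn b 0 (Ico m (m + k))) : b (m + k) = 0 := by
  rw [differenceOp_eq_init_add_last, differenceOp_eq_zero_of_eqOn _ hb, zero_add] at h
  exact (mul_eq_zero.mp h).resolve_left hw

lemma eq_zero_left_of_differenceOp_eq_zero {w : Fin (k + 1) → R} (hw : w 0 ≠ 0)
    (h : differenceOp w b m = 0) (hb : EqOn b 0 (Ico (m + 1) (m + 1 + k))) : b m = 0 := by
  rw [differenceOp_eq_zero_add_tail, differenceOp_eq_zero_of_eqOn _ hb, add_zero] at h
  exact (mul_eq_zero.mp h).resolve_left hw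

lemma det_hankelBlock_eq_zero_iff :
    (hankelBlock a k m).det = 0 ↔
      ∃ c : Fin k → R, c ≠ 0 ∧ EqOn (differenceOp c a) 0 (Ico m (m + k)) := by
  rw [← exists_mulVec_eq_zero_iff]
  refine exists_congr fun c => and_congr_right fun _ => ?_
  rw [hankelBlock, hankelKernel_submatrix_mulVec]
  constructor
  · rintro h x ⟨hmx, hxm⟩
    simpa [differenceOp, hmx] using congrFun h ⟨(x - m).toNat, by omega⟩
  · exact fun h => funext fun i => h (x := m + i) ⟨by omega, by omega⟩

lemma eq_zero_of_last_eq_zero (h : (hankelBlock a k m).det ≠ 0) {w : Fin (k + 1) → R}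
    (hw : EqOn (differenceOp w a) 0 (Ico m (m + k))) (hlast : w (Fin.last k) = 0) : w = 0 := by
  have hinit : Fin.init w = 0 := by
    by_contra hne
    refine h (det_hankelBlock_eq_zero_iff.mpr ⟨_, hne, fun x hx => ?_⟩)
    simpa [differenceOp_eq_init_add_last, hlast] using hw hx
  rw [← Fin.snoc_init_self w, hinit, hlast]
  ext j
  cases j using Fin.lastCases <;> simp

lemma eq_zero_of_zero_eq_zero (h : (hankelBlock a k (m + 1)).det ≠ 0) {w : Fin (k + 1) → R}
    (hw : EqOn (differenceOp w a) 0 (Ico m (m + k))) (hzero : w 0 = 0) : w = 0 := by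
  have htail : Fin.tail w = 0 := by
    by_contra hne
    refine h (det_hankelBlock_eq_zero_iff.mpr ⟨_, hne, fun x hx => ?_⟩)
    have := hw (x := x - 1) ⟨by linarith [hx.1], by linarith [hx.2]⟩
    simpa [differenceOp_eq_zero_add_tail, hzero] using this
  rw [← Fin.cons_self_tail w, htail, hzero]
  exact Matrix.cons_zero_zero

lemma exists_annihilator_of_det_hankelBlock (hbig : (hankelBlock a (k + 1) m).det = 0)
    (h : (hankelBlock a k (m + 1)).det ≠ 0) :
    ∃ w : Fin (k + 1) → R, w 0 ≠ 0 ∧ w (Fin.last k) ≠ 0 ∧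
      EqOn (differenceOp w a) 0 (Icc m (m + k)) := by
  obtain ⟨w, hw, hker⟩ := det_hankelBlock_eq_zero_iff.mp hbig
  have hker' : EqOn (differenceOp w a) 0 (Icc m (m + k)) :=
    fun x hx => hker ⟨hx.1, by have := hx.2; push_cast; omega⟩
  refine ⟨w, fun h0 => hw ?_, fun h0 => hw ?_, hker'⟩
  · exact eq_zero_of_zero_eq_zero h (hker'.mono Ico_subset_Icc_self) h0
  · exact eq_zero_of_last_eq_zero h (hker'.mono Ico_add_one_subset_Icc) h0

lemma det_hankelBlock_left_ne_zero (hbig : (hankelBlock a (k + 1) m).det = 0)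
    (h : (hankelBlock a k (m + 1)).det ≠ 0) : (hankelBlock a k m).det ≠ 0 := by
  obtain ⟨w, -, hlast, hw⟩ := exists_annihilator_of_det_hankelBlock hbig h
  intro hdet
  obtain ⟨c, hc, hker⟩ := det_hankelBlock_eq_zero_iff.mp hdet
  have hcomm : differenceOp w (differenceOp c a) m = 0 := by
    rw [differenceOp, differenceOp, translateSum_comm]
    exact differenceOp_eq_zero_of_eqOn c (hw.mono Ico_subset_Icc_self)
  exact h (det_hankelBlock_eq_zero_iff.mpr ⟨c, hc, eqOn_zero_Ico_succ hker
    (eq_zero_right_of_differenceOp_eq_zero hlast hcomm hker)⟩)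

lemma det_hankelBlock_right_ne_zero (hbig : (hankelBlock a (k + 1) m).det = 0)
    (h : (hankelBlock a k (m + 1)).det ≠ 0) : (hankelBlock a k (m + 1 + 1)).det ≠ 0 := by
  obtain ⟨w, hzero, -, hw⟩ := exists_annihilator_of_det_hankelBlock hbig h
  intro hdet
  obtain ⟨c, hc, hker⟩ := det_hankelBlock_eq_zero_iff.mp hdet
  have hcomm : differenceOp w (differenceOp c a) (m + 1) = 0 := by
    rw [differenceOp, differenceOp, translateSum_comm]
    exact differenceOp_eq_zero_of_eqOn c (hw.mono Ico_add_one_subset_Icc)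
  exact h (det_hankelBlock_eq_zero_iff.mpr ⟨c, hc, eqOn_zero_Ico_pred hker
    (eq_zero_left_of_differenceOp_eq_zero hzero hcomm hker)⟩)

lemma det_hankelBlock_ne_zero (hbig : ∀ m, (hankelBlock a (k + 1) m).det = 0)
    (h : (hankelBlock a k m).det ≠ 0) (x : ℤ) : (hankelBlock a k x).det ≠ 0 := by
  induction x using Int.inductionOn' (b := m) with
  | zero => exact h
  | succ x _ ih =>
    rw [← sub_add_cancel x 1] at ih ⊢
    exact det_hankelBlock_right_ne_zero (hbig _) ih
  | pred x _ ih =>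
    rw [← sub_add_cancel x 1] at ih
    exact det_hankelBlock_left_ne_zero (hbig _) ih

lemma last_mul_differenceOp_comm (h : (hankelBlock a k m).det ≠ 0) {v w : Fin (k + 1) → R}
    (hv : EqOn (differenceOp v a) 0 (Ico m (m + k)))
    (hw : EqOn (differenceOp w a) 0 (Ico m (m + k))) (x : ℤ) :
    v (Fin.last k) * differenceOp w a x = w (Fin.last k) * differenceOp v a x := by
  set u : Fin (k + 1) → R := v (Fin.last k) • w - w (Fin.last k) • v with hu
  have hop (y : ℤ) : differenceOp u a y =
      v (Fin.last k) * differenceOp w a y - w (Fin.last k) * differenceOp v a y := by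
    simp [hu, differenceOp, translateSum, sub_mul, mul_assoc, Finset.mul_sum]
  have hu0 : u = 0 := eq_zero_of_last_eq_zero h (fun y hy => by simp [hop, hv hy, hw hy])
    (by simp [hu, mul_comm])
  rw [← sub_eq_zero, ← hop, hu0]
  simp [differenceOp, translateSum]

/-- Kronecker's theorem on Hankel matrices of finite rank. -/
lemma exists_differenceOp_eq_zero (hbig : ∀ m, (hankelBlock a (k + 1) m).det = 0)
    (h : (hankelBlock a k m).det ≠ 0) :
    ∃ w : Fin (k + 1) → R, w 0 ≠ 0 ∧ w (Fin.last k) ≠ 0 ∧ differenceOp w a = 0 := by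
  have hne := det_hankelBlock_ne_zero hbig h
  obtain ⟨w, hzero, hlast, hw⟩ := exists_annihilator_of_det_hankelBlock (hbig 0) (hne _)
  refine ⟨w, hzero, hlast, eq_zero_of_eqOn_Ico (k := k) (m := 0) (fun x hx => ?_) (fun x hx => ?_)
    (hw.mono Ico_subset_Icc_self)⟩
  · obtain ⟨v, -, hvlast, hv⟩ := exists_annihilator_of_det_hankelBlock (hbig x) (hne _)
    have hcomm := last_mul_differenceOp_comm (hne x) (hv.mono Ico_subset_Icc_self) hx (x + k)
    simpa [hv (right_mem_Icc.mpr (by omega)), hvlast] using hcomm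
  · obtain ⟨v, -, hvlast, hv⟩ := exists_annihilator_of_det_hankelBlock (hbig x) (hne _)
    have hcomm := last_mul_differenceOp_comm (hne (x + 1)) (hv.mono Ico_add_one_subset_Icc) hx x
    simpa [hv (left_mem_Icc.mpr (by omega)), hvlast] using hcomm

variable [Fintype ι] [DecidableEq ι]

/-- Some nontrivial combination of more than `k` translates of `a` vanishes on a window of length
`k`, and the recurrence propagates these zeros to all of `ℤ`. -/
lemma det_submatrix_hankelKernel_eq_zero_of_differenceOp {w : Fin (k + 1) → R} (hzero : w 0 ≠ 0)
    (hlast : w (Fin.last k) ≠ 0) (hw : differenceOp w a = 0) (hk : k < Fintype.card ι)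
    (p q : ι → ℤ) : ((hankelKernel a).submatrix p q).det = 0 := by
  obtain ⟨c, hc, hc0⟩ : ∃ c,
      (hankelKernel a).submatrix (fun i : Fin k => (i : ℤ)) q *ᵥ c = 0 ∧ c ≠ 0 := by
    by_contra! hinj
    have hcard := card_le_of_injective R (mulVecLin _) ((injective_iff_map_eq_zero _).mpr hinj)
    exact hk.not_ge (by simpa using hcard)
  rw [hankelKernel_submatrix_mulVec] at hc
  have hwindow : EqOn (translateSum c q a) 0 (Ico 0 (0 + k)) := by
    rintro x ⟨hx0, hxk⟩
    lift x to ℕ using hx0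
    exact congrFun hc ⟨x, by omega⟩
  have hrec : differenceOp w (translateSum c q a) = 0 := by
    rw [differenceOp, translateSum_comm, ← differenceOp, hw]
    ext x
    simp [translateSum]
  have hsum : translateSum c q a = 0 := eq_zero_of_eqOn_Ico
    (fun x hx => eq_zero_right_of_differenceOp_eq_zero hlast (congrFun hrec x) hx)
    (fun x hx => eq_zero_left_of_differenceOp_eq_zero hzero (congrFun hrec x) hx) hwindow
  refine exists_mulVec_eq_zero_iff.mp ⟨c, hc0, ?_⟩
  rw [hankelKernel_submatrix_mulVec, hsum, Pi.zero_comp]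

lemma det_submatrix_hankelKernel_eq_zero_of_det_hankelBlock {n : ℕ}
    (h : ∀ m, (hankelBlock a n m).det = 0) (hn : n ≤ Fintype.card ι) (p q : ι → ℤ) :
    ((hankelKernel a).submatrix p q).det = 0 := by
  induction n with
  | zero => simpa using h 0
  | succ n ih =>
    by_cases hsmall : ∀ m, (hankelBlock a n m).det = 0
    · exact ih hsmall (by omega)
    · push Not at hsmall
      obtain ⟨m, hm⟩ := hsmall
      obtain ⟨w, hzero, hlast, hw⟩ := exists_differenceOp_eq_zero h hm
      exact det_submatrix_hankelKernel_eq_zero_of_differenceOp hzero hlast hw hn p q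

end Recurrence

section Density

variable {R : Type*} [CommRing R] [IsDomain R] {n : ℕ} {F : ℝ → R}

lemma det_submatrix_hankelKernel_int_mul_eq_zero
    (hdet : ∀ x h : ℝ,
      (Matrix.of fun i j : Fin n => F (x + ((i : ℕ) + (j : ℕ)) • h)).det = 0)
    (h : ℝ) (p q : Fin n → ℤ) :
    ((hankelKernel F).submatrix (fun i => p i * h) fun j => q j * h).det = 0 := by
  have hblock (m : ℤ) : (hankelBlock (fun x : ℤ => F (x * h)) n m).det = 0 := by
    rw [← hdet (m * h) h]
    congr 1
    ext i j
    simp [hankelBlock, add_mul, add_assoc]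
  convert det_submatrix_hankelKernel_eq_zero_of_det_hankelBlock hblock (by simp) p q using 2
  ext i j
  simp [add_mul]

lemma det_submatrix_hankelKernel_ratCast_eq_zero
    (hdet : ∀ x h : ℝ,
      (Matrix.of fun i j : Fin n => F (x + ((i : ℕ) + (j : ℕ)) • h)).det = 0)
    (s t : Fin n → ℚ) :
    ((hankelKernel F).submatrix (fun i => (s i : ℝ)) fun j => (t j : ℝ)).det = 0 := by
  obtain ⟨d, hd⟩ := IsLocalization.exist_integer_multiples_of_finite (nonZeroDivisors ℤ)
    (Sum.elim s t)
  choose p hp using hd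
  have hd0 : ((d : ℤ) : ℝ) ≠ 0 := Int.cast_ne_zero.mpr (nonZeroDivisors.ne_zero d.2)
  have hcast (i : Fin n ⊕ Fin n) : ((Sum.elim s t i : ℚ) : ℝ) = p i * ((d : ℤ) : ℝ)⁻¹ := by
    have : (p i : ℚ) = (d : ℤ) * Sum.elim s t i := by simpa using hp i
    rw [eq_mul_inv_iff_mul_eq₀ hd0, mul_comm]
    exact_mod_cast this.symm
  have hs (i : Fin n) := hcast (Sum.inl i)
  have ht (j : Fin n) := hcast (Sum.inr j)
  simp only [Sum.elim_inl, Sum.elim_inr] at hs ht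
  simp only [hs, ht]
  exact det_submatrix_hankelKernel_int_mul_eq_zero hdet _ (p ∘ Sum.inl) (p ∘ Sum.inr)

lemma det_submatrix_hankelKernel_eq_zero [TopologicalSpace R] [IsTopologicalRing R] [T2Space R]
    (hF : Continuous F)
    (hdet : ∀ x h : ℝ,
      (Matrix.of fun i j : Fin n => F (x + ((i : ℕ) + (j : ℕ)) • h)).det = 0)
    (s t : Fin n → ℝ) : ((hankelKernel F).submatrix s t).det = 0 := by
  have hdense := (DenseRange.piMap fun _ : Fin n => Rat.denseRange_cast (𝕜 := ℝ)).prodMap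
    (DenseRange.piMap fun _ : Fin n => Rat.denseRange_cast (𝕜 := ℝ))
  have hcont : Continuous fun st : (Fin n → ℝ) × (Fin n → ℝ) =>
      ((hankelKernel F).submatrix st.1 st.2).det :=
    Continuous.matrix_det <| continuous_matrix fun i j => hF.comp (by fun_prop)
  have hrat := hdense.equalizer hcont continuous_const <|
    funext fun st => det_submatrix_hankelKernel_ratCast_eq_zero hdet st.1 st.2
  exact congrFun hrat (s, t)

end Density

section Skeleton

variable {X Y G R K : Type*} [CommRing R] [Field K]

lemma apply_eq_of_det_bordered_eq_zero {r : ℕ} {M : Matrix X Y R} {s : Fin r → X} {t : Fin r → Y}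
    (hst : IsUnit (M.submatrix s t).det)
    (h : ∀ (s' : Fin (r + 1) → X) (t' : Fin (r + 1) → Y), (M.submatrix s' t').det = 0)
    (x : X) (y : Y) :
    M x y = (M.submatrix id t * (M.submatrix s t)⁻¹ * M.submatrix s id) x y := by
  let σ : Fin r ⊕ Fin 1 → X := Sum.elim s fun _ => x
  let τ : Fin r ⊕ Fin 1 → Y := Sum.elim t fun _ => y
  have hblocks : M.submatrix σ τ = fromBlocks (M.submatrix s t) (M.submatrix s fun _ => y)
      (M.submatrix (fun _ => x) t) (M.submatrix (fun _ => x) fun _ => y) := by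
    ext (i | i) (j | j) <;> rfl
  have hdet : (M.submatrix σ τ).det = 0 := by
    rw [← det_submatrix_equiv_self finSumFinEquiv.symm, submatrix_submatrix]
    exact h _ _
  have : Invertible (M.submatrix s t) := invertibleOfIsUnitDet _ hst
  rw [hblocks, det_fromBlocks₁₁, hst.mul_right_eq_zero, det_fin_one, Matrix.sub_apply,
    sub_eq_zero, invOf_eq_nonsing_inv] at hdet
  exact hdet

/-- The skeleton (or CUR) decomposition of a matrix of finite rank. -/
lemma exists_skeleton_decomposition {n : ℕ} {M : Matrix X Y K}
    (h : ∀ (s : Fin n → X) (t : Fin n → Y), (M.submatrix s t).det = 0) :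
    ∃ (r : ℕ) (s : Fin r → X) (t : Fin r → Y), (M.submatrix s t).det ≠ 0 ∧
      M = M.submatrix id t * (M.submatrix s t)⁻¹ * M.submatrix s id := by
  obtain ⟨r, hr, hr'⟩ := Nat.exists_not_and_succ_of_not_zero_of_exists
    (p := fun k => ∀ (s : Fin k → X) (t : Fin k → Y), (M.submatrix s t).det = 0)
    (fun h0 => by simpa using h0 Fin.elim0 Fin.elim0) ⟨n, h⟩
  push Not at hr
  obtain ⟨s, t, hst⟩ := hr
  exact ⟨r, s, t, hst, Matrix.ext fun x y => apply_eq_of_det_bordered_eq_zero hst.isUnit hr' x y⟩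

lemma exists_addChar_matrix_coefficient [AddCommMonoid G] [TopologicalSpace G] [ContinuousAdd G]
    [TopologicalSpace K] [IsTopologicalRing K] {n : ℕ} {f : G → K} (hf : Continuous f)
    (h : ∀ s t : Fin n → G, ((hankelKernel f).submatrix s t).det = 0) :
    ∃ (r : ℕ) (M : AddChar G (Matrix (Fin r) (Fin r) K)) (u v : Fin r → K),
      Continuous M ∧ ∀ x, f x = u ⬝ᵥ M x *ᵥ v := by
  obtain ⟨r, s, t, hst, hskel⟩ := exists_skeleton_decomposition h
  set U := (hankelKernel f).submatrix s t with hU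
  have factor (x y : G) :
      f (x + y) = (fun j => f (x + t j)) ᵥ* U⁻¹ ⬝ᵥ fun i => f (s i + y) :=
    congrFun (congrFun hskel x) y
  let B (x : G) : Matrix (Fin r) (Fin r) K := (hankelKernel f).submatrix (fun i => s i + x) t
  have B_add (x y : G) : B (x + y) = B x * U⁻¹ * B y := by
    ext i j
    change f (s i + (x + y) + t j) =
      (fun j => f (s i + x + t j)) ᵥ* U⁻¹ ⬝ᵥ fun i => f (s i + y + t j)
    rw [← add_assoc, add_assoc _ y, factor]
    simp only [add_assoc]
  have B_zero : B 0 = U := by simp [B, hU]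
  let M : AddChar G (Matrix (Fin r) (Fin r) K) :=
    { toFun x := B x * U⁻¹
      map_zero_eq_one' := by rw [B_zero, mul_nonsing_inv _ hst.isUnit]
      map_add_eq_mul' x y := by rw [B_add, Matrix.mul_assoc] }
  refine ⟨r, M, (fun j => f (t j)) ᵥ* U⁻¹, fun i => f (s i), ?_, fun x => ?_⟩
  · have hB : Continuous B := continuous_matrix fun i j => hf.comp (by fun_prop)
    exact hB.matrix_mul continuous_const
  · have hcol : (fun i => f (s i + x)) = M x *ᵥ fun i => f (s i) := by
      ext i
      have := factor (s i + x) 0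
      simp only [add_zero] at this
      exact this
    rw [← hcol]
    simpa using factor 0 x

end Skeleton

section OneParameterGroup

open NormedSpace

variable {𝔸 : Type*} [NormedRing 𝔸] [NormedAlgebra ℝ 𝔸] [CompleteSpace 𝔸]

lemma exists_isUnit_intervalIntegral_s12 {M : ℝ → 𝔸} (hM : Continuous M) (h0 : IsUnit (M 0)) :
    ∃ ε : ℝ, IsUnit (∫ y in (0 : ℝ)..ε, M y) := by
  have hslope := (hM.integral_hasStrictDerivAt 0 0).hasDerivAt.tendsto_slope_zero
  simp only [zero_add, intervalIntegral.integral_same, sub_zero] at hslope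
  have hunit := hslope.eventually (Units.isOpen.mem_nhds h0)
  obtain ⟨ε, hε, hne⟩ := (hunit.and self_mem_nhdsWithin).exists
  refine ⟨ε, ?_⟩
  have := ((IsUnit.mk0 ε hne).map (algebraMap ℝ 𝔸)).mul hε
  rwa [← Algebra.smul_def, smul_inv_smul₀ hne] at this

/-- Integrating `M (x + y) = M x * M y` over a short interval of `y` expresses `M x` as the
primitive of a continuous function, times a constant. -/
lemma exists_hasDerivAt_of_continuous (M : AddChar ℝ 𝔸) (hM : Continuous M) :
    ∃ A : 𝔸, ∀ x, HasDerivAt M (M x * A) x := by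
  obtain ⟨ε, C, hC⟩ := exists_isUnit_intervalIntegral_s12 hM (by simp)
  have hprim (x y : ℝ) : HasDerivAt (fun u => ∫ z in y..u, M z) (M x) x :=
    (hM.integral_hasStrictDerivAt y x).hasDerivAt
  have hint (x : ℝ) : M x = ((∫ y in (0 : ℝ)..x + ε, M y) - ∫ y in (0 : ℝ)..x, M y) * ↑C⁻¹ := by
    rw [Units.eq_mul_inv_iff_mul_eq, hC, intervalIntegral.integral_interval_sub_left
      (hM.intervalIntegrable _ _) (hM.intervalIntegrable _ _)]
    calc M x * ∫ y in (0 : ℝ)..ε, M y = ∫ y in (0 : ℝ)..ε, M (x + y) := by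
          simp only [M.map_add_eq_mul]
          exact ((ContinuousLinearMap.mul ℝ 𝔸 (M x)).intervalIntegral_comp_comm
            (hM.intervalIntegrable 0 ε)).symm
      _ = ∫ y in x..x + ε, M y := by
          simp
  refine ⟨(M ε - 1) * ↑C⁻¹, fun x => ?_⟩
  have hderiv := (((hprim (x + ε) 0).comp_add_const x ε).sub (hprim x 0)).mul_const (↑C⁻¹ : 𝔸)
  have hval : (M (x + ε) - M x) * ↑C⁻¹ = M x * ((M ε - 1) * ↑C⁻¹) := by
    rw [M.map_add_eq_mul, ← mul_assoc, mul_sub, mul_one]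
  rw [hval] at hderiv
  exact hderiv.congr_of_eventuallyEq (.of_forall hint)

lemma eq_mul_exp_smul_of_hasDerivAt {M : ℝ → 𝔸} {A : 𝔸} (hM : ∀ x, HasDerivAt M (M x * A) x)
    (t : ℝ) : M t = M 0 * exp (t • A) := by
  let _ : NormedAlgebra ℚ 𝔸 := NormedAlgebra.restrictScalars ℚ ℝ 𝔸
  have hderiv (x : ℝ) : HasDerivAt (fun x => M x * exp (x • -A)) 0 x := by
    have := (hM x).mul (hasDerivAt_exp_smul_const' (-A) x)
    rwa [neg_mul, mul_neg, mul_assoc, add_neg_cancel] at this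
  have hconst : M t * exp (t • -A) = M 0 := by
    simpa [exp_zero] using is_const_of_deriv_eq_zero (fun x => (hderiv x).differentiableAt)
      (fun x => (hderiv x).deriv) t 0
  have hinv : exp (t • -A) * exp (t • A) = 1 := by
    rw [← NormedSpace.exp_add_of_commute (by simp), smul_neg, neg_add_cancel, exp_zero]
  rw [← hconst, mul_assoc, hinv, mul_one]

lemma exists_eq_exp_smul_of_continuous (M : AddChar ℝ 𝔸) (hM : Continuous M) :
    ∃ A : 𝔸, ∀ t : ℝ, M t = exp (t • A) := by
  obtain ⟨A, hA⟩ := exists_hasDerivAt_of_continuous M hM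
  exact ⟨A, fun t => by simpa using eq_mul_exp_smul_of_hasDerivAt hA t⟩

end OneParameterGroup

section ExponentialPolynomial

open NormedSpace

namespace IsExpPoly1

lemma zero : IsExpPoly1 fun _ => 0 :=
  ⟨0, Fin.elim0, Fin.elim0, fun _ => by simp⟩

lemma add {f g : ℝ → ℂ} (hf : IsExpPoly1 f) (hg : IsExpPoly1 g) :
    IsExpPoly1 fun t => f t + g t := by
  obtain ⟨m, P, lam, hP⟩ := hf
  obtain ⟨k, Q, mu, hQ⟩ := hg
  refine ⟨m + k, Fin.append P Q, Fin.append lam mu, fun t => ?_⟩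
  simp [hP, hQ, Fin.sum_univ_add]

lemma eval_mul_exp (Q : Polynomial ℂ) (mu : ℂ) :
    IsExpPoly1 fun t => Q.eval (t : ℂ) * Complex.exp (mu * t) :=
  ⟨1, fun _ => Q, fun _ => mu, fun t => by simp⟩

end IsExpPoly1

lemma exp_mul_eq_sum_of_pow_mul_eq_zero {𝕂 𝔸 : Type*} [RCLike 𝕂] [NormedRing 𝔸]
    [NormedAlgebra 𝕂 𝔸] [CompleteSpace 𝔸] {N v : 𝔸} {k : ℕ} (h : N ^ k * v = 0) :
    exp N * v = ∑ j ∈ Finset.range k, (j.factorial : 𝕂)⁻¹ • (N ^ j * v) := by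
  have hterm (j : ℕ) (hj : j ∉ Finset.range k) : (j.factorial : 𝕂)⁻¹ • N ^ j * v = 0 := by
    rw [← Nat.sub_add_cancel (not_lt.mp (hj ∘ Finset.mem_range.mpr)), pow_add, smul_mul_assoc,
      mul_assoc, h, mul_zero, smul_zero]
  simp_rw [exp_eq_tsum 𝕂, ← (expSeries_summable' (𝕂 := 𝕂) N).tsum_mul_right v,
    tsum_eq_sum hterm, smul_mul_assoc]

variable {𝔸 : Type*} [NormedRing 𝔸] [NormedAlgebra ℂ 𝔸]

lemma exp_smul_eq_exp_smul_exp_smul_sub [CompleteSpace 𝔸] (A : 𝔸) (t mu : ℂ) :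
    exp (t • A) = Complex.exp (mu * t) • exp (t • (A - algebraMap ℂ 𝔸 mu)) := by
  let _ : NormedAlgebra ℚ 𝔸 := NormedAlgebra.restrictScalars ℚ ℂ 𝔸
  have hsplit : t • A = algebraMap ℂ 𝔸 (mu * t) + t • (A - algebraMap ℂ 𝔸 mu) := by
    simp [smul_sub, Algebra.algebraMap_eq_smul_one, smul_smul, mul_comm]
  rw [hsplit, NormedSpace.exp_add_of_commute (Algebra.commutes _ _), ← algebraMap_exp_comm,
    ← Algebra.smul_def, Complex.exp_eq_exp_ℂ]

lemma isExpPoly1_exp_smul_mul_of_pow_mul_eq_zero [CompleteSpace 𝔸] (L : 𝔸 →ₗ[ℂ] ℂ) {A v : 𝔸}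
    {mu : ℂ} {k : ℕ} (h : (A - algebraMap ℂ 𝔸 mu) ^ k * v = 0) :
    IsExpPoly1 fun t => L (exp ((t : ℂ) • A) * v) := by
  set N := A - algebraMap ℂ 𝔸 mu
  convert IsExpPoly1.eval_mul_exp (∑ j ∈ Finset.range k,
    Polynomial.monomial j ((j.factorial : ℂ)⁻¹ * L (N ^ j * v))) mu using 2 with t
  have hnil : ((t : ℂ) • N) ^ k * v = 0 := by rw [smul_pow, smul_mul_assoc, h, smul_zero]
  rw [exp_smul_eq_exp_smul_exp_smul_sub A t mu, smul_mul_assoc,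
    exp_mul_eq_sum_of_pow_mul_eq_zero (𝕂 := ℂ) hnil, map_smul, map_sum, Polynomial.eval_finsetSum,
    smul_eq_mul, mul_comm]
  congr 1
  refine Finset.sum_congr rfl fun j _ => ?_
  simp only [smul_pow, smul_mul_assoc, map_smul, smul_eq_mul, Polynomial.eval_monomial]
  ring

lemma exists_pow_sub_mul_eq_zero_of_mem_maxGenEigenspace {A v : 𝔸} {mu : ℂ}
    (hv : v ∈ Module.End.maxGenEigenspace (LinearMap.mulLeft ℂ A) mu) :
    ∃ k : ℕ, (A - algebraMap ℂ 𝔸 mu) ^ k * v = 0 := by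
  obtain ⟨k, hk⟩ := (Module.End.mem_maxGenEigenspace _ _ _).mp hv
  have hsub : LinearMap.mulLeft ℂ A - mu • 1 = LinearMap.mulLeft ℂ (A - algebraMap ℂ 𝔸 mu) := by
    ext w
    simp [sub_mul, Algebra.smul_def]
  rw [hsub, LinearMap.pow_mulLeft, LinearMap.mulLeft_apply] at hk
  exact ⟨k, hk⟩

lemma isExpPoly1_exp_smul [FiniteDimensional ℂ 𝔸] (L : 𝔸 →ₗ[ℂ] ℂ) (A : 𝔸) :
    IsExpPoly1 fun t => L (exp ((t : ℂ) • A)) := by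
  have : CompleteSpace 𝔸 := FiniteDimensional.complete ℂ 𝔸
  suffices ∀ v : 𝔸, IsExpPoly1 fun t => L (exp ((t : ℂ) • A) * v) by simpa using this 1
  intro v
  have hv : v ∈ ⨆ mu, Module.End.maxGenEigenspace (LinearMap.mulLeft ℂ A) mu := by
    rw [Module.End.iSup_maxGenEigenspace_eq_top]
    exact Submodule.mem_top
  induction hv using Submodule.iSup_induction' with
  | mem mu v hv =>
    obtain ⟨k, hk⟩ := exists_pow_sub_mul_eq_zero_of_mem_maxGenEigenspace hv
    exact isExpPoly1_exp_smul_mul_of_pow_mul_eq_zero L hk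
  | zero => simpa using IsExpPoly1.zero
  | add v w _ _ hv hw => simpa [mul_add] using hv.add hw

lemma isExpPoly1_comp_addChar [FiniteDimensional ℂ 𝔸] (L : 𝔸 →ₗ[ℂ] ℂ) (M : AddChar ℝ 𝔸)
    (hM : Continuous M) : IsExpPoly1 fun t => L (M t) := by
  have : CompleteSpace 𝔸 := FiniteDimensional.complete ℂ 𝔸
  let _ : NormedAlgebra ℝ 𝔸 := NormedAlgebra.restrictScalars ℝ ℂ 𝔸
  obtain ⟨A, hA⟩ := exists_eq_exp_smul_of_continuous M hM
  simpa [hA] using isExpPoly1_exp_smul L A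

open scoped Matrix.Norms.Operator in
lemma isExpPoly1_of_det_submatrix_hankelKernel_eq_zero {n : ℕ} {F : ℝ → ℂ} (hF : Continuous F)
    (h : ∀ s t : Fin n → ℝ, ((hankelKernel F).submatrix s t).det = 0) : IsExpPoly1 F := by
  obtain ⟨r, M, u, v, hM, hFM⟩ := exists_addChar_matrix_coefficient hF h
  let L : Matrix (Fin r) (Fin r) ℂ →ₗ[ℂ] ℂ :=
    dotProductEquiv ℂ (Fin r) u ∘ₗ (mulVecBilin ℂ ℂ).flip v
  rw [funext hFM]
  exact isExpPoly1_comp_addChar L M hM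

end ExponentialPolynomial

theorem popoviciu_ionescu_line_restriction_expPoly_general
    {E : Type*} [AddCommGroup E] [Module ℝ E] {n : ℕ} (f : E → ℂ) (x₀ h₀ : E)
    (hf : Continuous fun t : ℝ => f (x₀ + t • h₀))
    (heq : ∀ x h : E,
      Matrix.det (fun i j : Fin (n + 1) => f (x + ((i : ℕ) + (j : ℕ)) • h)) = 0) :
    IsExpPoly1 (fun t : ℝ => f (x₀ + t • h₀)) := by
  have hline (x h : ℝ) : (Matrix.of fun i j : Fin (n + 1) =>
      f (x₀ + (x + ((i : ℕ) + (j : ℕ)) • h) • h₀)).det = 0 := by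
    rw [← heq (x₀ + x • h₀) (h • h₀)]
    congr 1
    ext i j
    rw [of_apply, add_smul, smul_assoc, add_assoc]
  exact isExpPoly1_of_det_submatrix_hankelKernel_eq_zero hf
    (det_submatrix_hankelKernel_eq_zero hf hline)

theorem popoviciu_ionescu_line_restriction_expPoly
    {d n : ℕ} (hn : 1 ≤ n) (f : (Fin d → ℝ) → ℂ) (hf : Continuous f)
    (heq : ∀ x h : Fin d → ℝ,
      Matrix.det (fun i j : Fin (n + 1) => f (x + ((i : ℕ) + (j : ℕ)) • h)) = 0) :
    ∀ x₀ h₀ : Fin d → ℝ, IsExpPoly1 (fun t : ℝ => f (x₀ + t • h₀)) := fun x₀ h₀ =>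
  popoviciu_ionescu_line_restriction_expPoly_general f x₀ h₀ (by fun_prop) heq
end
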